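/- arXiv:1102.5557 — 5 statements merged into one kernel-verified Lean document; each statement's English description precedes it below -/
import Mathlib

section
/- Let Ω = ⋃_{j=1}^n (a_j, b_j) ⊆ ℝ be a finite union of bounded open intervals of total length 1, and let Λ ⊆ ℝ be a spectrum of Ω. Then there exists a positive integer T such that Λ + T = Λ, i.e., Λ is periodic with an integer period. -/
open MeasureTheory Set

/-- The exponential function `e_λ(x) = exp(2πiλx)`. -/
noncomputable def expF (lam : ℝ) : ℝ → ℂ :=
  fun x => Complex.exp (2 * (Real.pi : ℂ) * Complex.I * (lam : ℂ) * (x : ℂ))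

/-- `Λ` is a spectrum of `Ω`: the exponentials `e_λ`, `λ ∈ Λ`, viewed as elements of
`L²(Ω)`, form an orthonormal family whose span is dense. -/
def IsSpectrum (Ω Λ : Set ℝ) : Prop :=
  ∃ F : Λ → Lp ℂ 2 (volume.restrict Ω),
    (∀ l : Λ, ⇑(F l) =ᵐ[volume.restrict Ω] expF (l : ℝ)) ∧
    Orthonormal ℂ F ∧
    (Submodule.span ℂ (Set.range F)).topologicalClosure = ⊤

/-!
Put `B(ξ) = 2πiξ · ∫_Ω e_ξ`, a trigonometric polynomial whose frequencies are endpoints of the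
intervals. Orthogonality and Parseval identify `Λ` with the set of all `x` such that `B(x - l) = 0`
for every `l ∈ Λ`. The translates of `B` span a finite-dimensional space, so finitely many points
of `Λ` already cut out `Λ`. If `n` is an almost period of `B`, then Parseval forces `l + n` to lie
near `Λ` for each `l ∈ Λ`: otherwise the coefficients of `e_{l + n}` would be small multiples of a
square-summable family. As the zeros of `B` are isolated, the finitely many determining points are
all displaced by the same amount `s` when `l + n` is rounded to `Λ`, and `s` is then a period.
Finally, on a short interval both `Λ` and `sℤ` satisfy a Parseval identity; comparing them shows
that `s` is the number of cosets of `sℤ` in `Λ`.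
-/

section Exponentials

open Filter Real
open scoped FourierTransform

theorem expF_eq_fourierChar (l x : ℝ) : expF l x = 𝐞 (l * x) := by
  rw [expF, fourierChar_apply]
  congr 1
  push_cast
  ring

theorem expF_comm (l x : ℝ) : expF l x = expF x l := by
  rw [expF_eq_fourierChar, expF_eq_fourierChar, mul_comm]

theorem expF_add_left (l m x : ℝ) : expF (l + m) x = expF l x * expF m x := by
  simp only [expF_eq_fourierChar, add_mul, AddChar.map_add_eq_mul, Circle.coe_mul]

theorem expF_add_right (l x y : ℝ) : expF l (x + y) = expF l x * expF l y := by
  rw [expF_comm, expF_add_left, expF_comm x, expF_comm y]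

theorem conj_expF (l x : ℝ) : starRingEnd ℂ (expF l x) = expF (-l) x := by
  rw [expF_eq_fourierChar, expF_eq_fourierChar, neg_mul, AddChar.map_neg_eq_inv,
    Circle.coe_inv_eq_conj]

@[simp]
theorem norm_expF (l x : ℝ) : ‖expF l x‖ = 1 := by
  rw [expF_eq_fourierChar, Circle.norm_coe]

@[fun_prop]
theorem continuous_expF (l : ℝ) : Continuous (expF l) := by
  unfold expF
  fun_prop

theorem analyticAt_expF (l x : ℝ) : AnalyticAt ℝ (expF l) x :=
  (analyticAt_cexp.restrictScalars (𝕜 := ℝ)).comp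
    (analyticAt_const.mul (Complex.ofRealCLM.analyticAt x))

theorem frequently_forall_norm_expF_sub_one_lt (s : Finset ℝ) {ε : ℝ} (hε : 0 < ε) :
    ∃ᶠ n : ℕ in atTop, ∀ p ∈ s, ‖expF p n - 1‖ < ε := by
  -- In the compact group `Circle ^ s` the powers of every element return to any neighbourhood of 1.
  let z : s → Circle := fun p ↦ 𝐞 p
  have hnear : ∀ᶠ w : s → Circle in nhds 1, ∀ p, ‖(w p : ℂ) - 1‖ < ε := by
    refine eventually_all.2 fun p ↦ ?_
    have hcont : Continuous fun w : s → Circle ↦ ‖(w p : ℂ) - 1‖ := by fun_prop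
    exact hcont.continuousAt.eventually_lt_const (by simpa using hε)
  refine ((mapClusterPt_one_atTop_pow z).frequently hnear).mono fun n hn p hp ↦ ?_
  have hpow : expF p n = (z ⟨p, hp⟩ ^ n : Circle) := by
    rw [expF_eq_fourierChar, mul_comm, ← nsmul_eq_mul, AddChar.map_nsmul_eq_pow]
  rw [hpow]
  exact hn ⟨p, hp⟩

end Exponentials

/-- The space of trigonometric polynomials on `ℝ` with arbitrary real frequencies. -/
def trigPolynomials : Submodule ℂ (ℝ → ℂ) := Submodule.span ℂ (range expF)

section TrigPolynomials

open Filter Topology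

variable {g : ℝ → ℂ}

theorem expF_mem_trigPolynomials (l : ℝ) : expF l ∈ trigPolynomials :=
  Submodule.subset_span ⟨l, rfl⟩

theorem exists_eq_sum_of_mem_trigPolynomials (hg : g ∈ trigPolynomials) :
    ∃ c : ℝ →₀ ℂ, g = ∑ p ∈ c.support, c p • expF p := by
  obtain ⟨c, rfl⟩ := Finsupp.mem_span_range_iff_exists_finsupp.1 hg
  exact ⟨c, rfl⟩

theorem analyticOnNhd_of_mem_trigPolynomials (hg : g ∈ trigPolynomials) :
    AnalyticOnNhd ℝ g univ := by
  obtain ⟨c, rfl⟩ := exists_eq_sum_of_mem_trigPolynomials hg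
  exact Finset.analyticOnNhd_sum _ fun p _ x _ ↦ (analyticAt_expF p x).const_smul

theorem eventually_ne_zero_of_mem_trigPolynomials (hg : g ∈ trigPolynomials) (hg₀ : g ≠ 0)
    (z : ℝ) : ∀ᶠ x in 𝓝[≠] z, g x ≠ 0 := by
  have hana := analyticOnNhd_of_mem_trigPolynomials hg
  refine (hana z (mem_univ z)).eventually_eq_zero_or_eventually_ne_zero.resolve_left fun h ↦ hg₀ ?_
  exact hana.eq_of_eventuallyEq analyticOnNhd_const h

theorem frequently_forall_norm_add_natCast_sub_le (hg : g ∈ trigPolynomials) {ε : ℝ}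
    (hε : 0 < ε) : ∃ᶠ n : ℕ in atTop, ∀ x, ‖g (x + n) - g x‖ ≤ ε := by
  obtain ⟨c, rfl⟩ := exists_eq_sum_of_mem_trigPolynomials hg
  obtain ⟨η, hη, hηε⟩ := exists_pos_mul_lt hε (∑ p ∈ c.support, ‖c p‖)
  refine (frequently_forall_norm_expF_sub_one_lt c.support hη).mono fun n hn x ↦ ?_
  have hdiff : (∑ p ∈ c.support, c p • expF p) (x + n) - (∑ p ∈ c.support, c p • expF p) x =
      ∑ p ∈ c.support, c p * expF p x * (expF p n - 1) := by
    simp only [Finset.sum_apply, Pi.smul_apply, smul_eq_mul, ← Finset.sum_sub_distrib,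
      expF_add_right]
    exact Finset.sum_congr rfl fun p _ ↦ by ring
  calc ‖(∑ p ∈ c.support, c p • expF p) (x + n) - (∑ p ∈ c.support, c p • expF p) x‖
      ≤ ∑ p ∈ c.support, ‖c p‖ * η := by
        rw [hdiff]
        refine norm_sum_le_of_le _ fun p hp ↦ ?_
        rw [norm_mul, norm_mul, norm_expF, mul_one]
        gcongr
        exact (hn p hp).le
    _ ≤ ε := by
        rw [← Finset.sum_mul]
        exact hηε.le

theorem fg_span_translates_of_mem_trigPolynomials (hg : g ∈ trigPolynomials) (Λ : Set ℝ) :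
    (Submodule.span ℂ ((fun l x ↦ g (x - l)) '' Λ)).FG := by
  obtain ⟨c, rfl⟩ := exists_eq_sum_of_mem_trigPolynomials hg
  have : FiniteDimensional ℂ (Submodule.span ℂ (expF '' c.support)) :=
    FiniteDimensional.span_of_finite ℂ (c.support.finite_toSet.image expF)
  refine Submodule.FG.of_le_of_isNoetherian
    (T := Submodule.span ℂ (expF '' c.support)) (Submodule.span_le.2 ?_)
  rintro _ ⟨l, -, rfl⟩
  have htranslate : (fun x ↦ (∑ p ∈ c.support, c p • expF p) (x - l)) =
      ∑ p ∈ c.support, (c p * expF p (-l)) • expF p := by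
    ext x
    simp only [Finset.sum_apply, Pi.smul_apply, smul_eq_mul, sub_eq_add_neg, expF_add_right]
    exact Finset.sum_congr rfl fun p _ ↦ by ring
  beta_reduce
  rw [htranslate]
  exact Submodule.sum_mem _ fun p hp ↦
    Submodule.smul_mem _ _ (Submodule.subset_span (mem_image_of_mem _ hp))

theorem exists_finset_subset_forall_sub_eq_zero (hg : g ∈ trigPolynomials) (Λ : Set ℝ) :
    ∃ F : Finset ℝ, ↑F ⊆ Λ ∧
      ∀ x, (∀ l ∈ F, g (x - l) = 0) → ∀ l ∈ Λ, g (x - l) = 0 := by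
  classical
  obtain ⟨S, hSΛ, hS⟩ := (Submodule.fg_span_iff_fg_span_finset_subset _).1
    (fg_span_translates_of_mem_trigPolynomials hg Λ)
  obtain ⟨F, hFΛ, rfl⟩ := Finset.subset_set_image_iff.1 hSΛ
  refine ⟨F, hFΛ, fun x hx l hl ↦ ?_⟩
  have hle : Submodule.span ℂ ((fun l x ↦ g (x - l)) '' Λ) ≤
      LinearMap.ker (LinearMap.proj x : (ℝ → ℂ) →ₗ[ℂ] ℂ) := by
    rw [hS, Submodule.span_le, Finset.coe_image]
    rintro _ ⟨f, hf, rfl⟩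
    exact hx f hf
  exact hle (Submodule.subset_span (mem_image_of_mem _ hl))

end TrigPolynomials

/-- The Fourier transform `ξ ↦ ∫_Ω e_ξ` of the indicator function of `Ω`, with the sign convention
of `expF`. -/
noncomputable def indicatorFourier (Ω : Set ℝ) (ξ : ℝ) : ℂ := ∫ x in Ω, expF ξ x

/-- The Fourier transform of the indicator function of `Ω`, multiplied by `2πiξ`. Up to sign, this
is the transform of the distributional derivative of the indicator, so for a finite union of
intervals it only sees the endpoints. -/
noncomputable def boundaryFourier (Ω : Set ℝ) (ξ : ℝ) : ℂ :=
  2 * Real.pi * Complex.I * ξ * indicatorFourier Ω ξ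

section IndicatorFourier

variable {Ω : Set ℝ}

@[simp]
theorem indicatorFourier_zero (Ω : Set ℝ) : indicatorFourier Ω 0 = volume.real Ω := by
  simp [indicatorFourier, expF]

theorem continuous_indicatorFourier (hfin : volume Ω ≠ ⊤) : Continuous (indicatorFourier Ω) := by
  have := isFiniteMeasure_restrict.2 hfin
  refine continuous_of_dominated (bound := 1) (fun ξ ↦ (continuous_expF ξ).aestronglyMeasurable)
    (by simp) (integrable_const 1) (ae_of_all _ fun x ↦ ?_)
  simp only [expF_comm _ x]
  exact continuous_expF x

theorem eventually_indicatorFourier_ne_zero (h₀ : volume Ω ≠ 0) (hfin : volume Ω ≠ ⊤) :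
    ∀ᶠ ξ in nhds 0, indicatorFourier Ω ξ ≠ 0 :=
  (continuous_indicatorFourier hfin).continuousAt.eventually_ne <| by
    simpa using (measureReal_ne_zero_iff hfin).2 h₀

theorem boundaryFourier_eq_zero_iff {ξ : ℝ} :
    boundaryFourier Ω ξ = 0 ↔ ξ = 0 ∨ indicatorFourier Ω ξ = 0 := by
  simp [boundaryFourier, Real.pi_ne_zero]

theorem norm_boundaryFourier (Ω : Set ℝ) (ξ : ℝ) :
    ‖boundaryFourier Ω ξ‖ = 2 * Real.pi * |ξ| * ‖indicatorFourier Ω ξ‖ := by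
  simp [boundaryFourier, abs_of_pos Real.pi_pos]

theorem boundaryFourier_ne_zero (h₀ : volume Ω ≠ 0) (hfin : volume Ω ≠ ⊤) :
    boundaryFourier Ω ≠ 0 := by
  intro hB
  have hne : ∀ᶠ ξ in nhdsWithin (0 : ℝ) {0}ᶜ, ξ ≠ 0 ∧ indicatorFourier Ω ξ ≠ 0 :=
    eventually_mem_nhdsWithin.and
      (eventually_nhdsWithin_of_eventually_nhds (eventually_indicatorFourier_ne_zero h₀ hfin))
  obtain ⟨ξ, hξ, hξΩ⟩ := hne.exists
  exact (boundaryFourier_eq_zero_iff.1 (congrFun hB ξ)).elim hξ hξΩ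

theorem boundaryFourier_Ioo {a b : ℝ} (hab : a ≤ b) :
    boundaryFourier (Ioo a b) = expF b - expF a := by
  ext ξ
  rw [boundaryFourier, indicatorFourier, ← integral_Ioc_eq_integral_Ioo,
    ← intervalIntegral.integral_of_le hab]
  by_cases hξ : ξ = 0
  · simp [hξ, expF]
  · have hc : (2 * Real.pi * Complex.I * ξ : ℂ) ≠ 0 := by simp [hξ, Real.pi_ne_zero]
    simp only [Pi.sub_apply, expF_comm _ ξ]
    simp only [expF]
    rw [integral_exp_mul_complex hc, mul_div_cancel₀ _ hc]

theorem boundaryFourier_Ioo_mem_trigPolynomials (a b : ℝ) :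
    boundaryFourier (Ioo a b) ∈ trigPolynomials := by
  rcases le_total a b with hab | hba
  · rw [boundaryFourier_Ioo hab]
    exact sub_mem (expF_mem_trigPolynomials b) (expF_mem_trigPolynomials a)
  · have hzero : boundaryFourier (Ioo a b) = 0 := by
      ext ξ
      simp [boundaryFourier, indicatorFourier, Ioo_eq_empty_of_le hba]
    exact hzero ▸ zero_mem _

theorem boundaryFourier_iUnion_Ioo_mem_trigPolynomials {ι : Type*} [Finite ι] (a b : ι → ℝ) :
    boundaryFourier (⋃ j, Ioo (a j) (b j)) ∈ trigPolynomials := by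
  have := Fintype.ofFinite ι
  -- Inclusion-exclusion works because a finite intersection of intervals is an interval.
  have hexpand : boundaryFourier (⋃ j, Ioo (a j) (b j)) =
      ∑ u : Finset ι with u.Nonempty,
        (-1 : ℂ) ^ (u.card + 1) • boundaryFourier (⋂ j ∈ u, Ioo (a j) (b j)) := by
    ext ξ
    have h := integral_biUnion_eq_sum_powerset (μ := volume) (f := expF ξ)
      (t := Finset.univ) (s := fun j ↦ Ioo (a j) (b j)) (fun _ _ ↦ measurableSet_Ioo)
      (fun _ _ ↦ (continuous_expF ξ).integrableOn_Icc.mono_set Ioo_subset_Icc_self)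
    simp only [Finset.mem_univ, iUnion_true, Finset.powerset_univ, Complex.real_smul] at h
    simp only [boundaryFourier, indicatorFourier, h, Finset.mul_sum, Finset.sum_apply,
      Pi.smul_apply, smul_eq_mul]
    refine Finset.sum_congr rfl fun u _ ↦ ?_
    push_cast
    ring
  rw [hexpand]
  refine Submodule.sum_smul_mem _ _ fun u hu ↦ ?_
  have hne : u.Nonempty := (Finset.mem_filter.1 hu).2
  have hinter : ⋂ j ∈ u, Ioo (a j) (b j) = Ioo (u.sup' hne a) (u.inf' hne b) := by
    ext x
    simp [forall_and]
  exact hinter ▸ boundaryFourier_Ioo_mem_trigPolynomials _ _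

end IndicatorFourier

section SeparatedSets

variable {Λ : Set ℝ} {δ : ℝ}

theorem injective_floor_sub_div_of_pairwise_le_abs_sub (hδ : 0 < δ)
    (hsep : Λ.Pairwise fun l m ↦ δ ≤ |l - m|) (x : ℝ) :
    Function.Injective fun l : Λ ↦ ⌊(x - l) / δ⌋ := by
  intro l m hlm
  by_contra hne
  have hlt := Int.abs_sub_lt_one_of_floor_eq_floor hlm
  rw [← sub_div, sub_sub_sub_cancel_left, abs_div, abs_of_pos hδ, div_lt_one hδ] at hlt
  exact (hsep m.2 l.2 (Subtype.coe_ne_coe.2 (Ne.symm hne))).not_gt hlt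

theorem inv_sq_le_mul_one_div_abs_floor_add_half_rpow (hδ : 0 < δ) {y : ℝ} (hy : δ ≤ |y|) :
    (y ^ 2)⁻¹ ≤ 9 / (4 * δ ^ 2) * (1 / |(⌊y / δ⌋ : ℝ) + 1 / 2| ^ (2 : ℝ)) := by
  have hone : 1 ≤ |y / δ| := by rwa [abs_div, abs_of_pos hδ, one_le_div hδ]
  have hround : |(⌊y / δ⌋ : ℝ) + 1 / 2 - y / δ| ≤ 1 / 2 := by
    rw [abs_le]
    constructor <;> linarith [Int.floor_le (y / δ), Int.lt_floor_add_one (y / δ)]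
  have hle : |(⌊y / δ⌋ : ℝ) + 1 / 2| ≤ 3 / 2 * |y / δ| := by
    linarith [abs_sub_abs_le_abs_sub ((⌊y / δ⌋ : ℝ) + 1 / 2) (y / δ)]
  have hpos : 0 < |(⌊y / δ⌋ : ℝ) + 1 / 2| := by
    rw [abs_pos]
    intro hzero
    have hodd : 2 * ⌊y / δ⌋ + 1 = 0 := by
      have : 2 * (⌊y / δ⌋ : ℝ) + 1 = 0 := by linarith
      exact_mod_cast this
    omega
  have hy₀ : 0 < |y| := hδ.trans_le hy
  have hsq : |(⌊y / δ⌋ : ℝ) + 1 / 2| ^ 2 ≤ 9 / (4 * δ ^ 2) * y ^ 2 := by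
    calc |(⌊y / δ⌋ : ℝ) + 1 / 2| ^ 2 ≤ (3 / 2 * |y / δ|) ^ 2 := by gcongr
      _ = 9 / (4 * δ ^ 2) * y ^ 2 := by
        rw [mul_pow, sq_abs]
        ring
  rw [Real.rpow_two, mul_one_div, ← sq_abs y, inv_eq_one_div, div_le_div_iff₀ (by positivity)
    (by positivity), one_mul, sq_abs y]
  exact hsq

theorem exists_forall_tsum_inv_sub_sq_le (hδ : 0 < δ)
    (hsep : Λ.Pairwise fun l m ↦ δ ≤ |l - m|) :
    ∃ K : ℝ, ∀ x, (∀ l ∈ Λ, δ ≤ |x - l|) →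
      Summable (fun l : Λ ↦ ((x - l) ^ 2)⁻¹) ∧ ∑' l : Λ, ((x - l) ^ 2)⁻¹ ≤ K := by
  let q : ℤ → ℝ := fun k ↦ 9 / (4 * δ ^ 2) * (1 / |(k : ℝ) + 1 / 2| ^ (2 : ℝ))
  have hq : Summable q :=
    ((Real.summable_one_div_int_add_rpow (1 / 2) 2).2 one_lt_two).mul_left _
  have hq₀ (k : ℤ) : 0 ≤ q k := by positivity
  refine ⟨∑' k, q k, fun x hfar ↦ ?_⟩
  have hinj := injective_floor_sub_div_of_pairwise_le_abs_sub hδ hsep x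
  have hle (l : Λ) : ((x - l) ^ 2)⁻¹ ≤ q ⌊(x - l) / δ⌋ :=
    inv_sq_le_mul_one_div_abs_floor_add_half_rpow hδ (hfar l l.2)
  have hsum : Summable fun l : Λ ↦ ((x - l) ^ 2)⁻¹ :=
    (hq.comp_injective hinj).of_nonneg_of_le (fun l ↦ by positivity) hle
  exact ⟨hsum, (hsum.tsum_le_tsum hle (hq.comp_injective hinj)).trans
    (tsum_comp_le_tsum_of_inj hq hq₀ hinj)⟩

end SeparatedSets

section IndicatorExpF

variable {E I : Set ℝ}

theorem memLp_indicator_expF {μ : Measure ℝ} (hI : MeasurableSet I) (hfin : μ I ≠ ⊤) (l : ℝ)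
    {p : ENNReal} : MemLp (I.indicator (expF l)) p μ := by
  have := isFiniteMeasure_restrict.2 hfin
  rw [memLp_indicator_iff_restrict hI]
  exact MemLp.of_bound (continuous_expF l).aestronglyMeasurable 1 (by simp)

theorem setIntegral_expF_mul_indicator_expF (hI : MeasurableSet I) (hIE : I ⊆ E) (l m : ℝ) :
    ∫ x in E, expF l x * I.indicator (expF m) x = indicatorFourier I (l + m) := by
  simp_rw [← indicator_mul_right, ← expF_add_left]
  rw [setIntegral_indicator hI, inter_eq_right.2 hIE, indicatorFourier]

theorem setIntegral_sq_norm_indicator_expF (hI : MeasurableSet I) (hIE : I ⊆ E) (l : ℝ) :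
    ∫ x in E, ‖I.indicator (expF l) x‖ ^ 2 = volume.real I := by
  have hind : (fun x ↦ ‖I.indicator (expF l) x‖ ^ 2) = I.indicator 1 := by
    ext x
    by_cases hx : x ∈ I <;> simp [hx]
  rw [hind, setIntegral_indicator hI, inter_eq_right.2 hIE]
  simp

end IndicatorExpF

namespace IsSpectrum

open Filter Topology

variable {Ω Λ : Set ℝ}

theorem hasSum_sq_norm_integral (hΛ : IsSpectrum Ω Λ) {f : ℝ → ℂ}
    (hf : MemLp f 2 (volume.restrict Ω)) :
    HasSum (fun l : Λ ↦ ‖∫ x in Ω, expF (-l) x * f x‖ ^ 2) (∫ x in Ω, ‖f x‖ ^ 2) := by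
  obtain ⟨F, hF, horth, hdense⟩ := hΛ
  let B : HilbertBasis Λ ℂ (Lp ℂ 2 (volume.restrict Ω)) := HilbertBasis.mk horth hdense.ge
  have hcoeff (l : Λ) : B.repr (hf.toLp f) l = ∫ x in Ω, expF (-l) x * f x := by
    rw [B.repr_apply_apply, HilbertBasis.coe_mk, L2.inner_def]
    refine integral_congr_ae ?_
    filter_upwards [hF l, hf.coeFn_toLp] with x hFx hfx
    rw [hFx, hfx, RCLike.inner_apply', conj_expF]
  have hnorm : ‖hf.toLp f‖ ^ 2 = ∫ x in Ω, ‖f x‖ ^ 2 := by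
    rw [← Complex.ofReal_inj, Complex.ofReal_pow, ← Complex.coe_algebraMap,
      ← inner_self_eq_norm_sq_to_K (𝕜 := ℂ), L2.inner_def, Complex.coe_algebraMap,
      ← integral_complex_ofReal]
    refine integral_congr_ae ?_
    filter_upwards [hf.coeFn_toLp] with x hfx
    rw [hfx, inner_self_eq_norm_sq_to_K, Complex.ofReal_pow]
    rfl
  have hsum : HasSum (fun l : Λ ↦ ‖B.repr (hf.toLp f) l‖ ^ 2) (‖B.repr (hf.toLp f)‖ ^ 2) := by
    exact_mod_cast lp.hasSum_norm (by simp) (B.repr (hf.toLp f))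
  simpa only [hcoeff, LinearIsometryEquiv.norm_map, hnorm] using hsum

theorem indicatorFourier_sub_eq_zero (hΛ : IsSpectrum Ω Λ) {l m : ℝ} (hl : l ∈ Λ) (hm : m ∈ Λ)
    (hlm : l ≠ m) : indicatorFourier Ω (l - m) = 0 := by
  obtain ⟨F, hF, horth, -⟩ := hΛ
  have hinner : inner ℂ (F ⟨m, hm⟩) (F ⟨l, hl⟩) = 0 := horth.2 (by simpa using hlm.symm)
  rw [← hinner, L2.inner_def, indicatorFourier]
  refine integral_congr_ae ?_
  filter_upwards [hF ⟨m, hm⟩, hF ⟨l, hl⟩] with x hmx hlx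
  rw [hmx, hlx, RCLike.inner_apply, conj_expF, ← expF_add_left, sub_eq_add_neg]

theorem hasSum_sq_norm_indicatorFourier_sub (hΛ : IsSpectrum Ω Λ) {I : Set ℝ}
    (hI : MeasurableSet I) (hIΩ : I ⊆ Ω) (hfin : volume I ≠ ⊤) (x : ℝ) :
    HasSum (fun l : Λ ↦ ‖indicatorFourier I (x - l)‖ ^ 2) (volume.real I) := by
  have hf : MemLp (I.indicator (expF x)) 2 (volume.restrict Ω) :=
    memLp_indicator_expF hI ((volume.restrict_apply_le Ω I).trans_lt hfin.lt_top).ne x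
  simpa only [setIntegral_expF_mul_indicator_expF hI hIΩ, neg_add_eq_sub,
    setIntegral_sq_norm_indicator_expF hI hIΩ] using hΛ.hasSum_sq_norm_integral hf

theorem boundaryFourier_sub_eq_zero (hΛ : IsSpectrum Ω Λ) {l m : ℝ} (hl : l ∈ Λ) (hm : m ∈ Λ) :
    boundaryFourier Ω (l - m) = 0 := by
  rw [boundaryFourier_eq_zero_iff, sub_eq_zero]
  exact or_iff_not_imp_left.2 (hΛ.indicatorFourier_sub_eq_zero hl hm)

theorem exists_pos_pairwise_le_abs_sub (hΛ : IsSpectrum Ω Λ) (h₀ : volume Ω ≠ 0)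
    (hfin : volume Ω ≠ ⊤) : ∃ δ > 0, Λ.Pairwise fun l m ↦ δ ≤ |l - m| := by
  obtain ⟨δ, hδ, hne⟩ := Metric.eventually_nhds_iff.1 (eventually_indicatorFourier_ne_zero h₀ hfin)
  refine ⟨δ, hδ, fun l hl m hm hlm ↦ not_lt.1 fun hlt ↦ ?_⟩
  exact hne (by rwa [dist_zero_right, Real.norm_eq_abs])
    (hΛ.indicatorFourier_sub_eq_zero hl hm hlm)

theorem mem_iff_forall_boundaryFourier_sub_eq_zero (hΛ : IsSpectrum Ω Λ) (hΩ : MeasurableSet Ω)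
    (h₀ : volume Ω ≠ 0) (hfin : volume Ω ≠ ⊤) {x : ℝ} :
    x ∈ Λ ↔ ∀ l ∈ Λ, boundaryFourier Ω (x - l) = 0 := by
  refine ⟨fun hx l hl ↦ hΛ.boundaryFourier_sub_eq_zero hx hl, fun hx ↦ ?_⟩
  by_contra hxΛ
  have hzero (l : Λ) : indicatorFourier Ω (x - l) = 0 :=
    (boundaryFourier_eq_zero_iff.1 (hx l l.2)).resolve_left
      fun h ↦ hxΛ (sub_eq_zero.1 h ▸ l.2)
  have hsum := hΛ.hasSum_sq_norm_indicatorFourier_sub hΩ subset_rfl hfin x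
  simp only [hzero, norm_zero, ne_eq, OfNat.ofNat_ne_zero, not_false_eq_true, zero_pow] at hsum
  exact (measureReal_ne_zero_iff hfin).2 h₀ (hsum.unique hasSum_zero)

theorem nonempty (hΛ : IsSpectrum Ω Λ) (hΩ : MeasurableSet Ω) (h₀ : volume Ω ≠ 0)
    (hfin : volume Ω ≠ ⊤) : Λ.Nonempty := by
  by_contra hempty
  have hmem := hΛ.mem_iff_forall_boundaryFourier_sub_eq_zero hΩ h₀ hfin (x := 0)
  simp [not_nonempty_iff_eq_empty.1 hempty] at hmem

theorem frequently_forall_exists_abs_add_natCast_sub_lt (hΛ : IsSpectrum Ω Λ)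
    (hΩ : MeasurableSet Ω) (h₀ : volume Ω ≠ 0) (hfin : volume Ω ≠ ⊤)
    (hB : boundaryFourier Ω ∈ trigPolynomials) {δ : ℝ} (hδ : 0 < δ) :
    ∃ᶠ n : ℕ in atTop, ∀ l ∈ Λ, ∃ m ∈ Λ, |l + n - m| < δ := by
  obtain ⟨δ', hδ', hsep⟩ := hΛ.exists_pos_pairwise_le_abs_sub h₀ hfin
  have hη : 0 < min δ δ' := lt_min hδ hδ'
  obtain ⟨K, hK⟩ := exists_forall_tsum_inv_sub_sq_le hη
    (hsep.mono' fun l m hlm ↦ (min_le_right δ δ').trans hlm)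
  have hvol : 0 < volume.real Ω :=
    measureReal_nonneg.lt_of_ne' ((measureReal_ne_zero_iff hfin).2 h₀)
  obtain ⟨ε, hε, hεK⟩ := exists_pos_mul_lt hvol K
  refine (frequently_forall_norm_add_natCast_sub_le hB (Real.sqrt_pos.2 hε)).mono
    fun n hn l hl ↦ ?_
  by_contra! hfar
  obtain ⟨hsum, hle⟩ := hK (l + n) fun m hm ↦ (min_le_left δ δ').trans (hfar m hm)
  have hbound (m : Λ) : ‖indicatorFourier Ω (l + n - m)‖ ^ 2 ≤ ε * ((l + n - m) ^ 2)⁻¹ := by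
    have hpos : 0 < |l + n - m| := hδ.trans_le (hfar m m.2)
    have hclose : |l + n - m| * ‖indicatorFourier Ω (l + n - m)‖ ≤ √ε := by
      have hnorm := hn (l - m)
      rw [hΛ.boundaryFourier_sub_eq_zero hl m.2, sub_zero, sub_add_eq_add_sub,
        norm_boundaryFourier] at hnorm
      have hpi : 1 ≤ 2 * Real.pi := by linarith [Real.pi_gt_three]
      nlinarith [mul_nonneg hpos.le (norm_nonneg (indicatorFourier Ω (l + n - m)))]
    rw [← div_eq_mul_inv, ← sq_abs (l + n - m), le_div_iff₀' (by positivity), ← mul_pow]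
    exact (Real.le_sqrt (by positivity) hε.le).1 hclose
  have htotal := hasSum_le hbound
    (hΛ.hasSum_sq_norm_indicatorFourier_sub hΩ subset_rfl hfin (l + n)) (hsum.hasSum.mul_left ε)
  nlinarith

theorem periodic_of_forall_add_mem (hΛ : IsSpectrum Ω Λ) (hΩ : MeasurableSet Ω)
    (h₀ : volume Ω ≠ 0) (hfin : volume Ω ≠ ⊤) {F : Set ℝ} {s : ℝ}
    (hF : ∀ x, (∀ l ∈ F, boundaryFourier Ω (x - l) = 0) →
      ∀ l ∈ Λ, boundaryFourier Ω (x - l) = 0)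
    (hFs : ∀ l ∈ F, l + s ∈ Λ) : Function.Periodic (· ∈ Λ) s := by
  have hmem {x : ℝ} := hΛ.mem_iff_forall_boundaryFourier_sub_eq_zero hΩ h₀ hfin (x := x)
  have hdown (l : ℝ) (hl : l ∈ Λ) : l - s ∈ Λ :=
    hmem.2 <| hF _ fun f hf ↦ by
      rw [sub_sub, add_comm s]
      exact hΛ.boundaryFourier_sub_eq_zero hl (hFs f hf)
  refine fun l ↦ propext ⟨fun hl ↦ by simpa using hdown _ hl, fun hl ↦ hmem.2 fun m hm ↦ ?_⟩
  rw [← sub_sub_eq_add_sub]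
  exact hΛ.boundaryFourier_sub_eq_zero hl (hdown m hm)

theorem exists_pos_periodic (hΛ : IsSpectrum Ω Λ) (hΩ : MeasurableSet Ω) (h₀ : volume Ω ≠ 0)
    (hfin : volume Ω ≠ ⊤) (hB : boundaryFourier Ω ∈ trigPolynomials) :
    ∃ s > 0, Function.Periodic (· ∈ Λ) s := by
  obtain ⟨l₀, hl₀⟩ := hΛ.nonempty hΩ h₀ hfin
  obtain ⟨F, hFΛ, hF⟩ := exists_finset_subset_forall_sub_eq_zero hB Λ
  have hisolated : ∀ᶠ d in 𝓝 0, ∀ f ∈ F, boundaryFourier Ω (f - l₀ + d) = 0 → d = 0 := by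
    refine (Finset.eventually_all F).2 fun f _ ↦ ?_
    have hne := eventually_nhdsWithin_iff.1 (eventually_ne_zero_of_mem_trigPolynomials hB
      (boundaryFourier_ne_zero h₀ hfin) (f - l₀))
    have htendsto : Tendsto (fun d ↦ f - l₀ + d) (𝓝 0) (𝓝 (f - l₀)) := by
      simpa using (continuous_const_add (f - l₀)).tendsto 0
    filter_upwards [htendsto.eventually hne] with d hd hzero
    by_contra hd₀
    exact hd (by simpa using hd₀) hzero
  obtain ⟨δ, hδ, hd⟩ := Metric.eventually_nhds_iff.1 hisolated
  have hη : 0 < min (δ / 2) 1 := by positivity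
  obtain ⟨n, hn, hn₁⟩ := ((hΛ.frequently_forall_exists_abs_add_natCast_sub_lt hΩ h₀ hfin hB
    hη).and_eventually (eventually_ge_atTop 1)).exists
  obtain ⟨m₀, hm₀, hnear₀⟩ := hn l₀ hl₀
  rw [lt_min_iff] at hnear₀
  have hn₁' : (1 : ℝ) ≤ n := by exact_mod_cast hn₁
  refine ⟨m₀ - l₀, by linarith [(abs_lt.1 hnear₀.2).2],
    hΛ.periodic_of_forall_add_mem hΩ h₀ hfin hF fun f hf ↦ ?_⟩
  obtain ⟨m, hm, hnear⟩ := hn f (hFΛ hf)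
  rw [lt_min_iff] at hnear
  have hgap : m - m₀ - (f - l₀) = 0 := by
    refine hd ?_ f hf ?_
    · rw [dist_zero_right, Real.norm_eq_abs, abs_lt]
      constructor <;> linarith [abs_lt.1 hnear.1, abs_lt.1 hnear₀.1]
    · rw [add_sub_cancel]
      exact hΛ.boundaryFourier_sub_eq_zero hm hm₀
  rwa [show f + (m₀ - l₀) = m by linarith]

end IsSpectrum

section Progressions

variable {I Λ : Set ℝ} {s : ℝ}

theorem fourierCoeffOn_add_one_div {α : ℝ} (hs : 0 < s) (hα : α < α + 1 / s) (f : ℝ → ℂ)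
    (k : ℤ) :
    fourierCoeffOn hα f k = s * ∫ x in Ioc α (α + 1 / s), expF (-(k * s)) x * f x := by
  have hexp (x : ℝ) : fourier (-k) (x : AddCircle (α + 1 / s - α)) = expF (-(k * s)) x := by
    have hs' : (s : ℂ) ≠ 0 := by exact_mod_cast hs.ne'
    rw [fourier_coe_apply, expF]
    congr 1
    push_cast
    field_simp
    ring
  rw [fourierCoeffOn_eq_integral, intervalIntegral.integral_of_le hα.le]
  simp [hexp]

theorem hasSum_sq_norm_indicatorFourier_sub_int_mul (hs : 0 < s) {α : ℝ} (hI : MeasurableSet I)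
    (hIα : I ⊆ Ioc α (α + 1 / s)) (x : ℝ) :
    HasSum (fun k : ℤ ↦ ‖indicatorFourier I (x - k * s)‖ ^ 2) (volume.real I / s) := by
  have hα : α < α + 1 / s := lt_add_of_pos_right α (by positivity)
  have hfin : volume.restrict (Ioc α (α + 1 / s)) I ≠ ⊤ := measure_ne_top _ _
  have h := (hasSum_sq_fourierCoeffOn hα (memLp_indicator_expF hI hfin x)).div_const (s ^ 2)
  have hnorm (z : ℂ) : ‖(s : ℂ) * z‖ ^ 2 / s ^ 2 = ‖z‖ ^ 2 := by
    rw [norm_mul, mul_pow, Complex.norm_real, Real.norm_eq_abs, sq_abs,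
      mul_div_cancel_left₀ _ (by positivity)]
  have hscale (v : ℝ) : (1 / s)⁻¹ • v / s ^ 2 = v / s := by
    rw [smul_eq_mul]
    field_simp
  simpa only [fourierCoeffOn_add_one_div hs, hnorm, setIntegral_expF_mul_indicator_expF hI hIα,
    neg_add_eq_sub, intervalIntegral.integral_of_le hα.le, add_sub_cancel_left,
    setIntegral_sq_norm_indicator_expF hI hIα, hscale] using h

/-- The decomposition of an `s`-periodic set `Λ` into translates, by integer multiples of `s`, of
its part in `[0, s)`. -/
noncomputable def periodicSetEquiv (hs : 0 < s) (hper : Function.Periodic (· ∈ Λ) s) :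
    ↥(Λ ∩ Ico 0 s) × ℤ ≃ Λ where
  toFun q := ⟨q.1 + q.2 • s, (hper.zsmul q.2 q.1).mpr q.1.2.1⟩
  invFun l := (⟨toIcoMod hs 0 l, (hper.sub_zsmul_eq _).mpr l.2, by
    simpa using toIcoMod_mem_Ico hs 0 (l : ℝ)⟩, toIcoDiv hs 0 l)
  left_inv := by
    rintro ⟨⟨x, hx, hx₀⟩, k⟩
    have hmod : toIcoMod hs 0 x = x := (toIcoMod_eq_self hs).2 (by simpa using hx₀)
    have hdiv : toIcoDiv hs 0 x = 0 :=
      toIcoDiv_eq_of_sub_zsmul_mem_Ico hs (by simpa using hx₀)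
    ext <;> simp [hmod, hdiv, -zsmul_eq_mul]
  right_inv l := Subtype.ext (toIcoMod_add_toIcoDiv_zsmul hs 0 (l : ℝ))

theorem IsSpectrum.exists_eq_natCast_of_periodic {Ω : Set ℝ} (hΛ : IsSpectrum Ω Λ) (hs : 0 < s)
    (hper : Function.Periodic (· ∈ Λ) s) {a b : ℝ} (hab : a < b) (habΩ : Ioo a b ⊆ Ω) :
    ∃ N : ℕ, s = N := by
  let I := Ioo a (min b (a + 1 / s))
  have hIs : I ⊆ Ioc a (a + 1 / s) :=
    fun x hx ↦ ⟨hx.1, hx.2.le.trans (min_le_right _ _)⟩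
  have hIΩ : I ⊆ Ω := (Ioo_subset_Ioo_right (min_le_left _ _)).trans habΩ
  have hIpos : 0 < volume.real I := by
    have hlt : a < min b (a + 1 / s) := lt_min hab (lt_add_of_pos_right a (by positivity))
    rw [Real.volume_real_Ioo_of_le hlt.le]
    exact sub_pos.2 hlt
  have hΛsum := hΛ.hasSum_sq_norm_indicatorFourier_sub measurableSet_Ioo hIΩ measure_Ioo_lt_top.ne 0
  have hcosets : HasSum (fun _ : ↥(Λ ∩ Ico 0 s) ↦ volume.real I / s) (volume.real I) := by
    refine ((periodicSetEquiv hs hper).hasSum_iff.2 hΛsum).prod_fiberwise fun l ↦ ?_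
    have h := hasSum_sq_norm_indicatorFourier_sub_int_mul hs measurableSet_Ioo hIs (0 - l)
    simp only [sub_sub, ← zsmul_eq_mul] at h
    exact h
  have : Finite ↥(Λ ∩ Ico 0 s) := by
    by_contra hinf
    have := not_finite_iff_infinite.1 hinf
    exact (div_pos hIpos hs).ne' ((summable_const_iff _).1 hcosets.summable)
  have := Fintype.ofFinite ↥(Λ ∩ Ico 0 s)
  refine ⟨Fintype.card ↥(Λ ∩ Ico 0 s), ?_⟩
  have hcount := hcosets.unique (hasSum_fintype _)
  rw [Finset.sum_const, Finset.card_univ, nsmul_eq_mul, eq_comm, mul_div_assoc', div_eq_iff hs.ne',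
    mul_comm] at hcount
  exact (mul_left_cancel₀ hIpos.ne' hcount).symm

end Progressions

/-- Any spectrum of a finite union of intervals of total length 1 is periodic,
with an integer period. -/
theorem spectrum_periodic (n : ℕ) (a b : Fin n → ℝ) (Ω : Set ℝ)
    (hΩ : Ω = ⋃ j, Ioo (a j) (b j))
    (hvol : volume Ω = 1)
    (Λ : Set ℝ) (hΛ : IsSpectrum Ω Λ) :
    ∃ T : ℕ, 0 < T ∧ (fun l => l + (T : ℝ)) '' Λ = Λ := by
  subst hΩ
  have h₀ : volume (⋃ j, Ioo (a j) (b j)) ≠ 0 := by simp [hvol]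
  have hfin : volume (⋃ j, Ioo (a j) (b j)) ≠ ⊤ := by simp [hvol]
  obtain ⟨s, hs, hper⟩ := hΛ.exists_pos_periodic (.iUnion fun _ ↦ measurableSet_Ioo) h₀ hfin
    (boundaryFourier_iUnion_Ioo_mem_trigPolynomials a b)
  obtain ⟨j, hj⟩ : ∃ j, a j < b j := by
    by_contra! hba
    simp [Ioo_eq_empty_of_le (hba _)] at h₀
  obtain ⟨T, rfl⟩ := hΛ.exists_eq_natCast_of_periodic hs hper hj
    (subset_iUnion (fun j ↦ Ioo (a j) (b j)) j)
  refine ⟨T, by exact_mod_cast hs, ?_⟩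
  rw [image_add_right]
  ext x
  exact (hper.neg x).to_iff
end

section
/- Let Ω ⊆ ℝ be a finite union of bounded open intervals and let δ > 0. There exists a constant C > 0, depending only on Ω and δ, such that for every set A ⊆ ℝ whose distinct points are at distance at least δ from one another, and every R > 0, one has ∑_{a ∈ A, |a| > R} |χ̂_Ω(a)|² ≤ C/R. -/
open MeasureTheory Set
open scoped ENNReal NNReal

/-- The Fourier transform of the indicator function of `Ω`:
`χ̂_Ω(ξ) = ∫_Ω exp(-2πiξx) dx`. -/
noncomputable def ftChi (Ω : Set ℝ) (ξ : ℝ) : ℂ :=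
  ∫ x in Ω, Complex.exp (-(2 * (Real.pi : ℂ) * Complex.I * (ξ : ℂ) * (x : ℂ)))

/-!
By inclusion–exclusion `χ̂_Ω` is a signed sum of transforms of single intervals, so it decays like
`1 / |ξ|`; as it is also bounded by the measure of `Ω`, it is at most `M / (|ξ| + δ)`. The sum of
`δ / (|x| + δ) ^ 2` over a `δ`-separated set in `|x| > R` is then compared with the Cauchy
distribution of scale `R`: up to a factor `2 * π / R` each term is at most the mass of the ball of
radius `δ / 2` around `x`, and these balls are disjoint.
-/

section SeparatedSums

open Metric ProbabilityTheory

variable {ι : Type*} {δ : ℝ}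

lemma tsum_measure_ball_half_le {X : Type*} [PseudoMetricSpace X] [MeasurableSpace X]
    [OpensMeasurableSpace X] (μ : Measure X) {x : ι → X}
    (hx : Pairwise fun i j => δ ≤ dist (x i) (x j)) :
    ∑' i, μ (ball (x i) (δ / 2)) ≤ μ univ :=
  (tsum_meas_le_meas_iUnion_of_disjoint μ (fun _ => measurableSet_ball)
    fun _ _ hij => ball_disjoint_ball ((add_halves δ).trans_le (hx hij))).trans
    (measure_mono (subset_univ _))

lemma inv_sq_abs_add_le_cauchyPDFReal (hδ : 0 ≤ δ) {R : ℝ≥0} (hR : R ≠ 0) {x t : ℝ}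
    (hxR : R ≤ |x|) (ht : |t - x| ≤ δ) :
    ((|x| + δ) ^ 2)⁻¹ ≤ 2 * Real.pi / R * cauchyPDFReal 0 R t := by
  have ht_le : |t| ≤ |x| + δ := by linarith [abs_sub_abs_le_abs_sub t x]
  have ht_sq : t ^ 2 ≤ (|x| + δ) ^ 2 := sq_le_sq' (abs_le.1 ht_le).1 (abs_le.1 ht_le).2
  have hR_sq : (R : ℝ) ^ 2 ≤ (|x| + δ) ^ 2 := by gcongr; linarith
  calc ((|x| + δ) ^ 2)⁻¹ = 2 / (2 * (|x| + δ) ^ 2) := by field_simp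
    _ ≤ 2 / (t ^ 2 + R ^ 2) := by gcongr; linarith
    _ = 2 * Real.pi / R * cauchyPDFReal 0 R t := by
      rw [cauchyPDFReal_def, sub_zero]
      field_simp

lemma ofReal_div_sq_abs_add_le_cauchyMeasure_ball (hδ : 0 ≤ δ) {R : ℝ≥0} (hR : R ≠ 0) {x : ℝ}
    (hxR : R ≤ |x|) :
    ENNReal.ofReal (δ / (|x| + δ) ^ 2) ≤
      ENNReal.ofReal (2 * Real.pi / R) * cauchyMeasure 0 R (ball x (δ / 2)) := by
  rw [cauchyMeasure_of_scale_ne_zero 0 hR, withDensity_apply _ measurableSet_ball,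
    ← lintegral_const_mul _ (measurable_cauchyPDF 0 R)]
  calc ENNReal.ofReal (δ / (|x| + δ) ^ 2)
      = ∫⁻ _ in ball x (δ / 2), ENNReal.ofReal ((|x| + δ) ^ 2)⁻¹ := by
        rw [setLIntegral_const, Real.volume_ball, ← ENNReal.ofReal_mul (by positivity),
          mul_div_cancel₀ δ two_ne_zero, inv_mul_eq_div]
    _ ≤ ∫⁻ t in ball x (δ / 2), ENNReal.ofReal (2 * Real.pi / R) * cauchyPDF 0 R t := by
        refine setLIntegral_mono' measurableSet_ball fun t ht => ?_
        have ht_dist : |t - x| ≤ δ := (mem_ball.1 ht).le.trans (half_le_self hδ)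
        rw [cauchyPDF_def, ← ENNReal.ofReal_mul (by positivity)]
        exact ENNReal.ofReal_le_ofReal (inv_sq_abs_add_le_cauchyPDFReal hδ hR hxR ht_dist)

lemma tsum_ofReal_div_sq_abs_add_le (hδ : 0 ≤ δ) {R : ℝ} (hR : 0 < R) {x : ι → ℝ}
    (hx : Pairwise fun i j => δ ≤ dist (x i) (x j)) (hxR : ∀ i, R ≤ |x i|) :
    ∑' i, ENNReal.ofReal (δ / (|x i| + δ) ^ 2) ≤ ENNReal.ofReal (2 * Real.pi / R) := by
  lift R to ℝ≥0 using hR.le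
  have hR₀ : R ≠ 0 := (NNReal.coe_pos.1 hR).ne'
  calc ∑' i, ENNReal.ofReal (δ / (|x i| + δ) ^ 2)
      ≤ ∑' i, ENNReal.ofReal (2 * Real.pi / R) * cauchyMeasure 0 R (ball (x i) (δ / 2)) :=
        ENNReal.tsum_le_tsum fun i =>
          ofReal_div_sq_abs_add_le_cauchyMeasure_ball hδ hR₀ (hxR i)
    _ = ENNReal.ofReal (2 * Real.pi / R) * ∑' i, cauchyMeasure 0 R (ball (x i) (δ / 2)) :=
        ENNReal.tsum_mul_left
    _ ≤ ENNReal.ofReal (2 * Real.pi / R) * cauchyMeasure 0 R univ := by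
        gcongr
        exact tsum_measure_ball_half_le _ hx
    _ = ENNReal.ofReal (2 * Real.pi / R) := by rw [measure_univ, mul_one]

end SeparatedSums

section Decay

variable {ι : Type*}

lemma norm_exp_neg_two_pi_I_mul (ξ x : ℝ) :
    ‖Complex.exp (-(2 * (Real.pi : ℂ) * Complex.I * (ξ : ℂ) * (x : ℂ)))‖ = 1 := by
  simp [Complex.norm_exp]

lemma norm_ftChi_le_measureReal {Ω : Set ℝ} (hΩ : volume Ω < ∞) (ξ : ℝ) :
    ‖ftChi Ω ξ‖ ≤ volume.real Ω := by
  simpa only [ftChi, one_mul] using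
    norm_setIntegral_le_of_norm_le_const hΩ fun x _ => (norm_exp_neg_two_pi_I_mul ξ x).le

lemma abs_mul_norm_ftChi_Ioo_le (c d ξ : ℝ) : |ξ| * ‖ftChi (Ioo c d) ξ‖ ≤ Real.pi⁻¹ := by
  rcases le_or_gt d c with hdc | hcd
  · simp [ftChi, Ioo_eq_empty_of_le hdc, Real.pi_nonneg]
  rcases eq_or_ne ξ 0 with rfl | hξ
  · simp [Real.pi_nonneg]
  set k : ℂ := -(2 * Real.pi * Complex.I * ξ) with hk
  have hk_norm : ‖k‖ = 2 * Real.pi * |ξ| := by simp [hk, abs_of_pos Real.pi_pos]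
  have hk_ne : k ≠ 0 := by simp [hk, hξ, Real.pi_ne_zero]
  have h_eval : ftChi (Ioo c d) ξ = (Complex.exp (k * d) - Complex.exp (k * c)) / k := by
    rw [← integral_exp_mul_complex hk_ne, intervalIntegral.integral_of_le hcd.le,
      integral_Ioc_eq_integral_Ioo]
    simp only [ftChi, hk, neg_mul]
  have h_exp (y : ℝ) : ‖Complex.exp (k * y)‖ = 1 := by
    rw [hk, neg_mul]
    exact norm_exp_neg_two_pi_I_mul ξ y
  have h_num : ‖Complex.exp (k * d) - Complex.exp (k * c)‖ ≤ 2 :=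
    (norm_sub_le _ _).trans_eq (by rw [h_exp, h_exp]; norm_num)
  calc |ξ| * ‖ftChi (Ioo c d) ξ‖
      = |ξ| * (‖Complex.exp (k * d) - Complex.exp (k * c)‖ / (2 * Real.pi * |ξ|)) := by
        rw [h_eval, norm_div, hk_norm]
    _ ≤ |ξ| * (2 / (2 * Real.pi * |ξ|)) := by gcongr
    _ = Real.pi⁻¹ := by field_simp

lemma biInter_Ioo_eq_Ioo {α : Type*} [LinearOrder α] (a b : ι → α) {s : Finset ι}
    (hs : s.Nonempty) : ⋂ i ∈ s, Ioo (a i) (b i) = Ioo (s.sup' hs a) (s.inf' hs b) := by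
  ext x
  simp only [mem_iInter, mem_Ioo, Finset.sup'_lt_iff, Finset.lt_inf'_iff, forall_and]

lemma ftChi_biUnion_Ioo (a b : ι → ℝ) (s : Finset ι) (ξ : ℝ) :
    ftChi (⋃ i ∈ s, Ioo (a i) (b i)) ξ = ∑ u ∈ s.powerset with u.Nonempty,
      (-1 : ℝ) ^ (u.card + 1) • ftChi (⋂ i ∈ u, Ioo (a i) (b i)) ξ := by
  refine integral_biUnion_eq_sum_powerset (fun _ _ => measurableSet_Ioo) fun i _ => ?_
  exact (Continuous.integrableOn_Icc (by fun_prop)).mono_set Ioo_subset_Icc_self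

lemma abs_mul_norm_ftChi_biUnion_Ioo_le (a b : ι → ℝ) (s : Finset ι) (ξ : ℝ) :
    |ξ| * ‖ftChi (⋃ i ∈ s, Ioo (a i) (b i)) ξ‖ ≤ 2 ^ s.card * Real.pi⁻¹ := by
  calc |ξ| * ‖ftChi (⋃ i ∈ s, Ioo (a i) (b i)) ξ‖
      ≤ |ξ| * ∑ u ∈ s.powerset with u.Nonempty, ‖ftChi (⋂ i ∈ u, Ioo (a i) (b i)) ξ‖ := by
        rw [ftChi_biUnion_Ioo]
        gcongr
        refine norm_sum_le_of_le _ fun _ _ => ?_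
        rw [norm_smul, norm_pow, norm_neg, norm_one, one_pow, one_mul]
    _ = ∑ u ∈ s.powerset with u.Nonempty, |ξ| * ‖ftChi (⋂ i ∈ u, Ioo (a i) (b i)) ξ‖ :=
        Finset.mul_sum _ _ _
    _ ≤ ∑ u ∈ s.powerset with u.Nonempty, Real.pi⁻¹ := by
        refine Finset.sum_le_sum fun u hu => ?_
        rw [biInter_Ioo_eq_Ioo a b (Finset.mem_filter.1 hu).2]
        exact abs_mul_norm_ftChi_Ioo_le _ _ ξ
    _ ≤ ∑ _ ∈ s.powerset, Real.pi⁻¹ :=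
        Finset.sum_le_sum_of_subset_of_nonneg (Finset.filter_subset _ _)
          fun _ _ _ => inv_nonneg.2 Real.pi_nonneg
    _ = 2 ^ s.card * Real.pi⁻¹ := by
        rw [Finset.sum_const, Finset.card_powerset, nsmul_eq_mul, Nat.cast_pow, Nat.cast_ofNat]

lemma exists_norm_ftChi_iUnion_Ioo_le_div [Finite ι] (a b : ι → ℝ) {δ : ℝ} (hδ : 0 < δ) :
    ∃ M : ℝ, 0 < M ∧ ∀ ξ, ‖ftChi (⋃ i, Ioo (a i) (b i)) ξ‖ ≤ M / (|ξ| + δ) := by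
  have := Fintype.ofFinite ι
  set Ω := ⋃ i, Ioo (a i) (b i)
  have hΩ_finite : volume Ω < ∞ :=
    (Bornology.isBounded_iUnion.2 fun i => Metric.isBounded_Ioo (a i) (b i)).measure_lt_top
  refine ⟨2 ^ Fintype.card ι * Real.pi⁻¹ + δ * volume.real Ω, by positivity, fun ξ => ?_⟩
  have h_decay : |ξ| * ‖ftChi Ω ξ‖ ≤ 2 ^ Fintype.card ι * Real.pi⁻¹ := by
    simpa only [Finset.mem_univ, iUnion_true, Finset.card_univ] using
      abs_mul_norm_ftChi_biUnion_Ioo_le a b Finset.univ ξ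
  have h_bounded : δ * ‖ftChi Ω ξ‖ ≤ δ * volume.real Ω := by
    gcongr
    exact norm_ftChi_le_measureReal hΩ_finite ξ
  rw [le_div_iff₀' (by positivity), add_mul]
  exact add_le_add h_decay h_bounded

end Decay

/-- Tail estimate: for `Ω` a finite union of intervals and any `δ`-separated set `A`,
`∑_{a ∈ A, |a| > R} |χ̂_Ω(a)|² ≤ C/R` with `C = C(Ω, δ)`. -/
theorem tail_estimate (n : ℕ) (a b : Fin n → ℝ) (Ω : Set ℝ)
    (hΩ : Ω = ⋃ j, Ioo (a j) (b j)) (δ : ℝ) (hδ : 0 < δ) :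
    ∃ C : ℝ, 0 < C ∧
      ∀ A : Set ℝ, (∀ x ∈ A, ∀ y ∈ A, x ≠ y → δ ≤ |x - y|) →
        ∀ R : ℝ, 0 < R →
          ∑' x : {y : ℝ // y ∈ A ∧ R < |y|}, ((‖ftChi Ω (x : ℝ)‖₊ : ℝ≥0∞)) ^ 2
            ≤ ENNReal.ofReal (C / R) := by
  subst hΩ
  obtain ⟨M, hM_pos, hM⟩ := exists_norm_ftChi_iUnion_Ioo_le_div a b hδ
  refine ⟨M ^ 2 / δ * (2 * Real.pi), by positivity, fun A hA R hR => ?_⟩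
  have h_term (ξ : ℝ) : (‖ftChi (⋃ j, Ioo (a j) (b j)) ξ‖₊ : ℝ≥0∞) ^ 2 ≤
      ENNReal.ofReal (M ^ 2 / δ) * ENNReal.ofReal (δ / (|ξ| + δ) ^ 2) := by
    rw [← enorm_eq_nnnorm, ← ofReal_norm, ← ENNReal.ofReal_pow (norm_nonneg _),
      ← ENNReal.ofReal_mul (by positivity), div_mul_div_cancel₀ hδ.ne', ← div_pow]
    gcongr
    exact hM ξ
  have h_sep : Pairwise fun x y : {y : ℝ // y ∈ A ∧ R < |y|} => δ ≤ dist (x : ℝ) y :=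
    fun x y hxy => hA x x.2.1 y y.2.1 (Subtype.coe_ne_coe.2 hxy)
  refine (ENNReal.tsum_le_tsum fun x : {y : ℝ // y ∈ A ∧ R < |y|} => h_term x).trans ?_
  rw [ENNReal.tsum_mul_left, mul_div_assoc, ENNReal.ofReal_mul (by positivity)]
  gcongr
  exact tsum_ofReal_div_sq_abs_add_le hδ.le hR h_sep fun x => x.2.2.le
end

section
/- Let Ω ⊆ ℝ be a bounded measurable set of Lebesgue measure 1 and Λ ⊆ ℝ. The family of exponentials E(Λ) = {e_λ : λ ∈ Λ} is orthonormal in L²(Ω) if and only if the packing condition holds: ∑_{λ∈Λ} |χ̂_Ω(x - λ)|² ≤ 1 for almost every x ∈ ℝ. -/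
open MeasureTheory Set
open scoped ENNReal NNReal

/-- The family of exponentials `E(Λ)` is orthonormal in `L²(Ω)`. -/
def ExpOrthonormal (Ω Λ : Set ℝ) : Prop :=
  ∃ F : Λ → Lp ℂ 2 (volume.restrict Ω),
    (∀ l : Λ, ⇑(F l) =ᵐ[volume.restrict Ω] expF (l : ℝ)) ∧
    Orthonormal ℂ F

/-!
Write `e_x` for the exponential of frequency `x`, a unit vector of `L²(Ω)` with
`⟪e_w, e_x⟫ = χ̂_Ω(w - x)`, of modulus `|χ̂_Ω(x - w)|`. If `E(Λ)` is orthonormal, the packing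
condition is Bessel's inequality for `e_x`. Conversely, the packing sum is lower semicontinuous
in `x`, so the bound holds everywhere once it holds almost everywhere; at `x = λ ∈ Λ` the term of
`λ` already equals `1`, so all the other terms vanish.
-/

open BoundedContinuousFunction VectorFourier
open scoped BoundedContinuousFunction FourierTransform

theorem forall_le_of_ae_le_of_lowerSemicontinuous {X γ : Type*} [TopologicalSpace X]
    [MeasurableSpace X] {ν : Measure X} [ν.IsOpenPosMeasure] [LinearOrder γ] {f : X → γ} {c : γ}
    (hf : LowerSemicontinuous f) (h : ∀ᵐ x ∂ν, f x ≤ c) (x : X) : f x ≤ c := by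
  have hdense : Dense (f ⁻¹' Iic c) := Measure.dense_of_ae h
  exact (hf.isClosed_preimage c).closure_subset (hdense x)

section InnerProductSpace

variable {𝕜 E ι : Type*} [RCLike 𝕜] [SeminormedAddCommGroup E] [InnerProductSpace 𝕜 E]

theorem tsum_enorm_inner_sq_le_enorm_sq {v : ι → E} (hv : Orthonormal 𝕜 v) (x : E) :
    ∑' i, ‖inner 𝕜 (v i) x‖ₑ ^ 2 ≤ ‖x‖ₑ ^ 2 := by
  simp only [← ofReal_norm, ← ENNReal.ofReal_pow (norm_nonneg _)]
  rw [← ENNReal.ofReal_tsum_of_nonneg (fun _ ↦ by positivity) (hv.inner_products_summable x)]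
  exact ENNReal.ofReal_le_ofReal (hv.tsum_inner_products_le x)

theorem orthonormal_of_tsum_enorm_inner_sq_le_one {v : ι → E} (hv : ∀ i, ‖v i‖ = 1)
    (h : ∀ j, ∑' i, ‖inner 𝕜 (v i) (v j)‖ₑ ^ 2 ≤ 1) : Orthonormal 𝕜 v := by
  classical
  refine ⟨hv, fun i j hij ↦ ?_⟩
  have hself : ‖inner 𝕜 (v j) (v j)‖ₑ = 1 := by
    simp only [inner_self_eq_norm_sq_to_K, hv j, map_one, one_pow, enorm_one]
  have hpair : ‖inner 𝕜 (v i) (v j)‖ₑ ^ 2 + 1 ≤ 0 + 1 := by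
    simpa only [Finset.sum_pair hij, hself, one_pow, zero_add] using
      (ENNReal.sum_le_tsum {i, j}).trans (h j)
  have hsq : ‖inner 𝕜 (v i) (v j)‖ₑ ^ 2 ≤ 0 :=
    (ENNReal.add_le_add_iff_right ENNReal.one_ne_top).1 hpair
  simpa using hsq

theorem orthonormal_comp_iff_ae_tsum_enorm_inner_sq_le_one {X : Type*} [TopologicalSpace X]
    [MeasurableSpace X] (ν : Measure X) [ν.IsOpenPosMeasure] {u : X → E} (hu : ∀ x, ‖u x‖ = 1)
    (p : ι → X) (hcont : ∀ i, Continuous fun x ↦ inner 𝕜 (u (p i)) (u x)) :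
    Orthonormal 𝕜 (fun i ↦ u (p i)) ↔ ∀ᵐ x ∂ν, ∑' i, ‖inner 𝕜 (u (p i)) (u x)‖ₑ ^ 2 ≤ 1 := by
  constructor
  · intro horth
    refine .of_forall fun x ↦ (tsum_enorm_inner_sq_le_enorm_sq horth (u x)).trans_eq ?_
    simp [← ofReal_norm, hu]
  · intro h
    have hlsc : LowerSemicontinuous fun x ↦ ∑' i, ‖inner 𝕜 (u (p i)) (u x)‖ₑ ^ 2 :=
      lowerSemicontinuous_tsum fun i ↦
        ((ENNReal.continuous_pow 2).comp (hcont i).enorm).lowerSemicontinuous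
    exact orthonormal_of_tsum_enorm_inner_sq_le_one (fun i ↦ hu (p i)) fun j ↦
      forall_le_of_ae_le_of_lowerSemicontinuous hlsc h (p j)

end InnerProductSpace

section Character

variable {V W ι : Type*} [AddCommGroup V] [Module ℝ V] [TopologicalSpace V] [MeasurableSpace V]
  [BorelSpace V] [AddCommGroup W] [Module ℝ W] [TopologicalSpace W] {e : AddChar ℝ Circle}
  {L : V →ₗ[ℝ] W →ₗ[ℝ] ℝ} (he : Continuous e) (hL : Continuous fun p : V × W ↦ L p.1 p.2)
  (μ : Measure V)

theorem inner_toLp_char [IsFiniteMeasure μ] (w x : W) :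
    inner ℂ (toLp 2 μ ℂ (char he hL w)) (toLp 2 μ ℂ (char he hL x)) =
      fourierIntegral e μ L (1 : V → ℂ) (w - x) := by
  rw [BoundedContinuousFunction.inner_toLp]
  refine integral_congr_ae (.of_forall fun v ↦ ?_)
  simp [Circle.smul_def, AddChar.map_sub_eq_div, AddChar.map_neg_eq_inv, div_eq_mul_inv]

theorem norm_toLp_char [IsProbabilityMeasure μ] (w : W) : ‖toLp 2 μ ℂ (char he hL w)‖ = 1 := by
  have hsq : ‖toLp 2 μ ℂ (char he hL w)‖ ^ 2 = 1 := by
    rw [← inner_self_eq_norm_sq (𝕜 := ℂ), inner_toLp_char]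
    simp [fourierIntegral]
  exact (pow_eq_one_iff_of_nonneg (norm_nonneg _) two_ne_zero).1 hsq

theorem enorm_inner_toLp_char [IsFiniteMeasure μ] (w x : W) :
    ‖inner ℂ (toLp 2 μ ℂ (char he hL w)) (toLp 2 μ ℂ (char he hL x))‖ₑ =
      ‖fourierIntegral e μ L (1 : V → ℂ) (x - w)‖ₑ := by
  rw [← inner_toLp_char he hL μ x w, ← ofReal_norm, norm_inner_symm, ofReal_norm]

theorem orthonormal_iff_packing_general [FirstCountableTopology W] [ContinuousSub W]
    [MeasurableSpace W] (ν : Measure W) [ν.IsOpenPosMeasure] [IsProbabilityMeasure μ] (w : ι → W) :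
    Orthonormal ℂ (fun i ↦ toLp 2 μ ℂ (char he hL (w i))) ↔
      ∀ᵐ x ∂ν, ∑' i, ‖fourierIntegral e μ L (1 : V → ℂ) (x - w i)‖ₑ ^ 2 ≤ 1 := by
  have hcont (i : ι) : Continuous fun x ↦
      inner ℂ (toLp 2 μ ℂ (char he hL (w i))) (toLp 2 μ ℂ (char he hL x)) := by
    simp only [inner_toLp_char]
    exact (fourierIntegral_continuous he hL (integrable_const 1)).comp
      (continuous_const.sub continuous_id)
  simpa only [enorm_inner_toLp_char] using
    orthonormal_comp_iff_ae_tsum_enorm_inner_sq_le_one ν (norm_toLp_char he hL μ) w hcont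

end Character

theorem ftChi_eq_fourierIntegral (Ω : Set ℝ) (ξ : ℝ) :
    ftChi Ω ξ = fourierIntegral 𝐞 (volume.restrict Ω) (LinearMap.mul ℝ ℝ) (1 : ℝ → ℂ) ξ := by
  rw [Real.vector_fourierIntegral_eq_integral_exp_smul, ftChi]
  congr 1 with x
  rw [LinearMap.mul_apply', Pi.one_apply, smul_eq_mul, mul_one]
  push_cast
  ring_nf

/-- The exponential `expF l` as a bounded continuous function, obtained as the character attached
to the multiplication pairing on `ℝ`. -/
noncomputable def boundedExpF (l : ℝ) : ℝ →ᵇ ℂ :=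
  char Real.continuous_fourierChar (L := LinearMap.mul ℝ ℝ) continuous_mul l

theorem coe_boundedExpF (l : ℝ) : ⇑(boundedExpF l) = expF l := by
  ext x
  change (𝐞 (x * l) : ℂ) = expF l x
  rw [Real.fourierChar_apply, expF]
  push_cast
  ring_nf

theorem expOrthonormal_iff_orthonormal_toLp_boundedExpF (Ω Λ : Set ℝ)
    [IsFiniteMeasure (volume.restrict Ω)] :
    ExpOrthonormal Ω Λ ↔
      Orthonormal ℂ (fun l : Λ ↦ toLp 2 (volume.restrict Ω) ℂ (boundedExpF l)) := by
  have hcoe (l : Λ) : toLp 2 (volume.restrict Ω) ℂ (boundedExpF l) =ᵐ[volume.restrict Ω] expF l :=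
    coe_boundedExpF l ▸ coeFn_toLp 2 (volume.restrict Ω) ℂ (boundedExpF l)
  constructor
  · rintro ⟨F, hF, horth⟩
    have hF_eq : F = fun l : Λ ↦ toLp 2 (volume.restrict Ω) ℂ (boundedExpF l) :=
      funext fun l ↦ Lp.ext ((hF l).trans (hcoe l).symm)
    rwa [← hF_eq]
  · exact fun horth ↦ ⟨_, hcoe, horth⟩

/-- Orthonormality of `E(Λ)` in `L²(Ω)` is equivalent to the packing condition
`∑_{λ∈Λ} |χ̂_Ω(x-λ)|² ≤ 1` a.e. -/
theorem orthonormal_iff_packing (Ω : Set ℝ)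
    (hbd : Bornology.IsBounded Ω) (hmeas : MeasurableSet Ω)
    (hvol : volume Ω = 1) (Λ : Set ℝ) :
    ExpOrthonormal Ω Λ ↔
      ∀ᵐ x : ℝ, ∑' l : Λ, ((‖ftChi Ω (x - (l : ℝ))‖₊ : ℝ≥0∞)) ^ 2 ≤ 1 := by
  have : IsProbabilityMeasure (volume.restrict Ω) := ⟨by simpa using hvol⟩
  simp only [expOrthonormal_iff_orthonormal_toLp_boundedExpF, ftChi_eq_fourierIntegral]
  exact orthonormal_iff_packing_general _ _ _ volume _
end

section
/- Let Ω ⊆ ℝ be a bounded measurable set of Lebesgue measure 1 and Λ ⊆ ℝ. Then Λ is a spectrum of Ω if and only if the tiling condition holds: ∑_{λ∈Λ} |χ̂_Ω(x - λ)|² = 1 for almost every x ∈ ℝ. -/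
open MeasureTheory Set
open scoped ENNReal NNReal

/-!
Everything takes place in `L²(μ)` for a probability measure `μ`; the theorem is the case
`μ = volume.restrict Ω`. The exponentials `e_x` are unit vectors there, depend continuously on
`x`, span a dense subspace, and satisfy `⟪e_x, e_y⟫ = μ̂(x - y)`, so that the tiling condition at
`x` is Parseval's identity for `e_x` with respect to the family `(e_l)_{l ∈ Λ}`.

If `Λ` is a spectrum, Parseval's identity holds for every vector. Conversely, suppose that it holds
for `e_x` for almost every, hence for a dense set of `x`. By semicontinuity Bessel's inequality
then holds for all `e_x`; at `x = l ∈ Λ` the term indexed by `l` already exhausts the bound, so the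
family is orthonormal. Equality in Bessel's inequality puts `e_x` into the closed span of the
family for a dense set of `x`, and the closed span of those `e_x` is the whole space.
-/

section Parseval

variable {𝕜 H ι : Type*} [RCLike 𝕜] [NormedAddCommGroup H] [InnerProductSpace 𝕜 H]

lemma tsum_enorm_inner_sq_hilbertBasis [CompleteSpace H] (b : HilbertBasis ι 𝕜 H) (x : H) :
    ∑' i, ‖inner 𝕜 (b i) x‖ₑ ^ 2 = ‖x‖ₑ ^ 2 := by
  have hsum : HasSum (fun i ↦ ‖inner 𝕜 (b i) x‖ ^ 2) (‖x‖ ^ 2) := by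
    have h := RCLike.hasSum_re 𝕜 (b.hasSum_inner_mul_inner x x)
    simpa only [inner_self_eq_norm_sq, inner_mul_symm_re_eq_norm, norm_mul,
      norm_inner_symm x, ← sq] using h
  have h := congrArg ENNReal.ofReal hsum.tsum_eq
  rw [ENNReal.ofReal_tsum_of_nonneg (fun _ ↦ by positivity) hsum.summable] at h
  simpa only [ENNReal.ofReal_pow (norm_nonneg _), ofReal_norm] using h

lemma tsum_enorm_inner_sq_le {F : ι → H} (hF : Orthonormal 𝕜 F) (x : H) :
    ∑' i, ‖inner 𝕜 (F i) x‖ₑ ^ 2 ≤ ‖x‖ₑ ^ 2 := by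
  have h := ENNReal.ofReal_le_ofReal (hF.tsum_inner_products_le x)
  rw [ENNReal.ofReal_tsum_of_nonneg (fun _ ↦ by positivity) (hF.inner_products_summable x)] at h
  simpa only [ENNReal.ofReal_pow (norm_nonneg _), ofReal_norm] using h

lemma isClosed_setOf_tsum_enorm_inner_sq_le (F : ι → H) :
    IsClosed {x : H | ∑' i, ‖inner 𝕜 (F i) x‖ₑ ^ 2 ≤ ‖x‖ₑ ^ 2} := by
  have hlsc : LowerSemicontinuous fun x ↦ ∑' i, ‖inner 𝕜 (F i) x‖ₑ ^ 2 :=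
    lowerSemicontinuous_tsum fun i ↦ Continuous.lowerSemicontinuous (by fun_prop)
  exact hlsc.isClosed_epigraph.preimage (f := fun x ↦ (x, ‖x‖ₑ ^ 2)) (by fun_prop)

lemma orthonormal_of_tsum_enorm_inner_sq_le_one_s5 {F : ι → H} (hF : ∀ i, ‖F i‖ = 1)
    (hle : ∀ j, ∑' i, ‖inner 𝕜 (F i) (F j)‖ₑ ^ 2 ≤ 1) : Orthonormal 𝕜 F := by
  classical
  refine ⟨hF, fun i j hij ↦ ?_⟩
  have hdiag : ‖inner 𝕜 (F j) (F j)‖ₑ = 1 := by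
    rw [← ofReal_norm, inner_self_eq_norm_sq_to_K, hF]
    simp
  have hpair : ‖inner 𝕜 (F i) (F j)‖ₑ ^ 2 + 1 ≤ 0 + 1 :=
    calc ‖inner 𝕜 (F i) (F j)‖ₑ ^ 2 + 1
        = ∑ k ∈ {i, j}, ‖inner 𝕜 (F k) (F j)‖ₑ ^ 2 := by
          rw [Finset.sum_pair hij, hdiag, one_pow]
      _ ≤ ∑' k, ‖inner 𝕜 (F k) (F j)‖ₑ ^ 2 := ENNReal.sum_le_tsum _
      _ ≤ 0 + 1 := by simpa using hle j
  have hzero := nonpos_iff_eq_zero.mp ((ENNReal.add_le_add_iff_right ENNReal.one_ne_top).mp hpair)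
  exact enorm_eq_zero.mp (pow_eq_zero_iff two_ne_zero |>.mp hzero)

variable [CompleteSpace H]

lemma mem_topologicalClosure_span_of_tsum_enorm_inner_sq {F : ι → H} (hF : Orthonormal 𝕜 F)
    {x : H} (hx : ∑' i, ‖inner 𝕜 (F i) x‖ₑ ^ 2 = ‖x‖ₑ ^ 2) :
    x ∈ (Submodule.span 𝕜 (range F)).topologicalClosure := by
  set K := (Submodule.span 𝕜 (range F)).topologicalClosure
  have hFK (i : ι) : F i ∈ K :=
    Submodule.le_topologicalClosure _ (Submodule.subset_span (mem_range_self i))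
  have hinner (i : ι) : inner 𝕜 (F i) (K.starProjection x) = inner 𝕜 (F i) x := by
    rw [← K.inner_starProjection_left_eq_right, K.starProjection_eq_self_iff.mpr (hFK i)]
  have hle : ‖x‖ₑ ^ 2 ≤ ‖K.starProjection x‖ₑ ^ 2 := by
    simpa only [hinner, hx] using tsum_enorm_inner_sq_le hF (K.starProjection x)
  rw [K.mem_iff_norm_starProjection]
  refine (K.norm_starProjection_apply_le x).antisymm (enorm_le_iff_norm_le.mp ?_)
  exact (ENNReal.pow_le_pow_left_iff two_ne_zero).mp hle

theorem orthonormal_and_total_of_tsum_enorm_inner_sq {F : ι → H} (hF : ∀ i, ‖F i‖ = 1)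
    {S : Set H} (hFS : ∀ i, F i ∈ closure S)
    (hS : (Submodule.span 𝕜 S).topologicalClosure = ⊤)
    (hparseval : ∀ x ∈ S, ∑' i, ‖inner 𝕜 (F i) x‖ₑ ^ 2 = ‖x‖ₑ ^ 2) :
    Orthonormal 𝕜 F ∧ (Submodule.span 𝕜 (range F)).topologicalClosure = ⊤ := by
  have hbessel : closure S ⊆ {x | ∑' i, ‖inner 𝕜 (F i) x‖ₑ ^ 2 ≤ ‖x‖ₑ ^ 2} :=
    closure_minimal (fun x hx ↦ (hparseval x hx).le) (isClosed_setOf_tsum_enorm_inner_sq_le F)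
  have horth : Orthonormal 𝕜 F := orthonormal_of_tsum_enorm_inner_sq_le_one_s5 hF fun j ↦ by
    simpa [← ofReal_norm, hF] using hbessel (hFS j)
  refine ⟨horth, top_le_iff.mp (hS.ge.trans ?_)⟩
  refine Submodule.topologicalClosure_minimal _ (Submodule.span_le.mpr fun x hx ↦ ?_)
    (Submodule.isClosed_topologicalClosure _)
  exact mem_topologicalClosure_span_of_tsum_enorm_inner_sq horth (hparseval x hx)

end Parseval

section FourierUniqueness

open BoundedContinuousFunction ComplexConjugate

variable {V W : Type*} [AddCommGroup V] [Module ℝ V] [MeasurableSpace V]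
  [AddCommGroup W] [Module ℝ W] {e : AddChar ℝ Circle} {L : V →ₗ[ℝ] W →ₗ[ℝ] ℝ} {μ : Measure V}

lemma fourierIntegral_conj (f : V → ℂ) (w : W) :
    VectorFourier.fourierIntegral e μ L (fun v ↦ conj (f v)) w =
      conj (VectorFourier.fourierIntegral e μ L f (-w)) := by
  rw [VectorFourier.fourierIntegral, VectorFourier.fourierIntegral, ← integral_conj]
  simp only [Circle.smul_def, smul_eq_mul, map_mul, map_neg, neg_neg, AddChar.map_neg_eq_inv,
    Circle.coe_inv_eq_conj]

variable [TopologicalSpace W]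

section IntegrableParts

variable [TopologicalSpace V] [BorelSpace V]

lemma fourierIntegral_ofReal_re_eq_zero (he : Continuous e)
    (hL : Continuous fun p : V × W ↦ L p.1 p.2) {f : V → ℂ} (hf : Integrable f μ)
    (h : VectorFourier.fourierIntegral e μ L f = 0) :
    VectorFourier.fourierIntegral e μ L (fun v ↦ ((f v).re : ℂ)) = 0 := by
  have hconj : VectorFourier.fourierIntegral e μ L (fun v ↦ conj (f v)) = 0 := by
    ext w
    rw [fourierIntegral_conj, h, Pi.zero_apply, map_zero, Pi.zero_apply]
  have hfconj : Integrable (fun v ↦ conj (f v)) μ :=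
    Complex.conjCLE.toContinuousLinearMap.integrable_comp hf
  have hre : (fun v ↦ ((f v).re : ℂ)) = (2⁻¹ : ℂ) • (f + fun v ↦ conj (f v)) := by
    ext v
    simp [Complex.add_conj]
  rw [hre, VectorFourier.fourierIntegral_const_smul,
    VectorFourier.fourierIntegral_add he hL hf hfconj, h, hconj, add_zero, smul_zero]

lemma integrable_posPart_smul_char (he : Continuous e)
    (hL : Continuous fun p : V × W ↦ L p.1 p.2) {g : V → ℝ} (hg : Integrable g μ) (w : W) :
    Integrable (fun v ↦ max (g v) 0 • char he hL w v) μ :=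
  hg.pos_part.smul_bdd 1 (char he hL w).continuous.aestronglyMeasurable
    (ae_of_all _ fun _ ↦ (Circle.norm_coe _).le)

end IntegrableParts

variable [PseudoEMetricSpace V] [BorelSpace V] [CompleteSpace V] [SecondCountableTopology V]

lemma ae_eq_zero_of_fourierIntegral_ofReal_eq_zero (he : Continuous e) (he' : e ≠ 1)
    (hL : Continuous fun p : V × W ↦ L p.1 p.2) (hL' : ∀ v ≠ 0, L v ≠ 0)
    {g : V → ℝ} (hg : Integrable g μ)
    (h : VectorFourier.fourierIntegral e μ L (fun v ↦ (g v : ℂ)) = 0) : g =ᵐ[μ] 0 := by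
  have hdensity (w : W) {u : V → ℝ} (hu : Integrable u μ) :
      ∫ v, char he hL w v ∂(μ.withDensity fun v ↦ ENNReal.ofReal (u v)) =
        ∫ v, max (u v) 0 • char he hL w v ∂μ :=
    integral_withDensity_eq_integral_toReal_smul₀ hu.aemeasurable.ennreal_ofReal
      (ae_of_all _ fun _ ↦ ENNReal.ofReal_lt_top) _
  have := isFiniteMeasure_withDensity_ofReal hg.2
  have := isFiniteMeasure_withDensity_ofReal hg.neg.2
  have hparts : (μ.withDensity fun v ↦ ENNReal.ofReal (g v)) =
      μ.withDensity fun v ↦ ENNReal.ofReal ((-g) v) := by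
    refine ext_of_integral_char_eq he he' hL' hL fun w ↦ ?_
    rw [hdensity w hg, hdensity w hg.neg, ← sub_eq_zero,
      ← integral_sub (integrable_posPart_smul_char he hL hg w)
        (integrable_posPart_smul_char he hL hg.neg w)]
    refine Eq.trans (integral_congr_ae (ae_of_all _ fun v ↦ ?_)) (congrFun h (-w))
    simp only [Pi.neg_apply, ← sub_smul, max_zero_sub_max_neg_zero_eq_self (g v)]
    simp only [map_neg, neg_neg, char_apply, Circle.smul_def, smul_eq_mul, Complex.real_smul,
      mul_comm]
  filter_upwards [(withDensity_eq_iff hg.aemeasurable.ennreal_ofReal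
    hg.neg.aemeasurable.ennreal_ofReal hg.lintegral_lt_top.ne).mp hparts] with v hv
  have hmax : max (g v) 0 = max (-g v) 0 := by
    simpa only [ENNReal.toReal_ofReal', Pi.neg_apply] using congrArg ENNReal.toReal hv
  rw [Pi.zero_apply, ← max_zero_sub_max_neg_zero_eq_self (g v), hmax, sub_self]

theorem ae_eq_zero_of_fourierIntegral_eq_zero (he : Continuous e) (he' : e ≠ 1)
    (hL : Continuous fun p : V × W ↦ L p.1 p.2) (hL' : ∀ v ≠ 0, L v ≠ 0)
    {f : V → ℂ} (hf : Integrable f μ)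
    (h : VectorFourier.fourierIntegral e μ L f = 0) : f =ᵐ[μ] 0 := by
  have hre := ae_eq_zero_of_fourierIntegral_ofReal_eq_zero he he' hL hL' hf.re
    (fourierIntegral_ofReal_re_eq_zero he hL hf h)
  have hrot : VectorFourier.fourierIntegral e μ L (-Complex.I • f) = 0 := by
    rw [VectorFourier.fourierIntegral_const_smul, h, smul_zero]
  have him := ae_eq_zero_of_fourierIntegral_ofReal_eq_zero he he' hL hL' (hf.smul (-Complex.I)).re
    (fourierIntegral_ofReal_re_eq_zero he hL (hf.smul (-Complex.I)) hrot)
  filter_upwards [hre, him] with v hvre hvim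
  exact Complex.ext hvre (by simpa using hvim)

end FourierUniqueness

section MeasureSpectrum

open BoundedContinuousFunction Real FourierTransform

variable {E : Type*} [NormedAddCommGroup E] [InnerProductSpace ℝ E]
  [MeasurableSpace E] [BorelSpace E]

/-- The exponential `t ↦ exp(2πi⟪t, x⟫)` as a vector of `L²(μ)`. -/
noncomputable def expLp (μ : Measure E) [IsFiniteMeasure μ] (x : E) : Lp ℂ 2 μ :=
  toLp 2 μ ℂ (char continuous_fourierChar (L := innerₗ E) continuous_inner x)

/-- The Fourier transform `μ̂(ξ) = ∫ exp(-2πi⟪t, ξ⟫) dμ(t)` of a measure. -/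
noncomputable def ftMeasure (μ : Measure E) : E → ℂ :=
  VectorFourier.fourierIntegral 𝐞 μ (innerₗ E) 1

/-- `Λ` is a spectrum of the measure `μ`: the exponentials with frequencies in `Λ` form a complete
orthonormal system in `L²(μ)`. -/
def IsMeasureSpectrum (μ : Measure E) [IsFiniteMeasure μ] (Λ : Set E) : Prop :=
  Orthonormal ℂ (fun l : Λ ↦ expLp μ l) ∧
    (Submodule.span ℂ (range fun l : Λ ↦ expLp μ l)).topologicalClosure = ⊤

variable (μ : Measure E) [IsFiniteMeasure μ]

lemma coeFn_expLp (x : E) : expLp μ x =ᵐ[μ] fun t ↦ (𝐞 (inner ℝ t x) : ℂ) :=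
  coeFn_toLp 2 μ ℂ _

lemma inner_expLp_eq_fourierIntegral (x : E) (f : Lp ℂ 2 μ) :
    inner ℂ (expLp μ x) f = VectorFourier.fourierIntegral 𝐞 μ (innerₗ E) f x := by
  rw [L2.inner_def]
  refine integral_congr_ae ?_
  filter_upwards [coeFn_expLp μ x] with t ht
  rw [ht, RCLike.inner_apply, mul_comm, AddChar.map_neg_eq_inv, Circle.smul_def,
    Circle.coe_inv_eq_conj]
  rfl

lemma inner_expLp_expLp (x y : E) : inner ℂ (expLp μ x) (expLp μ y) = ftMeasure μ (x - y) := by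
  rw [inner_expLp_eq_fourierIntegral]
  refine integral_congr_ae ?_
  filter_upwards [coeFn_expLp μ y] with t ht
  rw [ht, Pi.one_apply, Circle.smul_def, Circle.smul_def, smul_eq_mul, smul_eq_mul, mul_one,
    ← Circle.coe_mul, ← AddChar.map_add_eq_mul, innerₗ_apply_apply, innerₗ_apply_apply,
    inner_sub_right, neg_sub, neg_add_eq_sub]

lemma continuous_ftMeasure : Continuous (ftMeasure μ) :=
  VectorFourier.fourierIntegral_continuous continuous_fourierChar (L := innerₗ E) continuous_inner
    (integrable_const (1 : ℂ))

lemma norm_expLp_sub_sq (x y : E) :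
    ‖expLp μ x - expLp μ y‖ ^ 2 = 2 * (ftMeasure μ 0 - ftMeasure μ (x - y)).re := by
  have hself (z : E) : ‖expLp μ z‖ ^ 2 = (ftMeasure μ 0).re := by
    rw [← inner_self_eq_norm_sq (𝕜 := ℂ), inner_expLp_expLp, sub_self, RCLike.re_eq_complex_re]
  rw [norm_sub_sq (𝕜 := ℂ), hself, hself, inner_expLp_expLp, RCLike.re_eq_complex_re,
    Complex.sub_re]
  ring

lemma continuous_expLp : Continuous (expLp μ) := by
  refine continuous_iff_continuousAt.mpr fun x ↦ tendsto_iff_norm_sub_tendsto_zero.mpr ?_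
  have hnorm (y : E) :
      ‖expLp μ y - expLp μ x‖ = √(2 * (ftMeasure μ 0 - ftMeasure μ (y - x)).re) := by
    rw [← norm_expLp_sub_sq, Real.sqrt_sq (norm_nonneg _)]
  have hcont : Continuous fun y ↦ √(2 * (ftMeasure μ 0 - ftMeasure μ (y - x)).re) := by
    have := continuous_ftMeasure μ
    fun_prop
  simpa [hnorm] using hcont.tendsto x

lemma norm_expLp (μ : Measure E) [IsProbabilityMeasure μ] (x : E) : ‖expLp μ x‖ = 1 := by
  rw [norm_eq_sqrt_re_inner (𝕜 := ℂ), inner_expLp_expLp]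
  simp [ftMeasure, VectorFourier.fourierIntegral]

variable [CompleteSpace E] [SecondCountableTopology E]

lemma topologicalClosure_span_range_expLp :
    (Submodule.span ℂ (range (expLp μ))).topologicalClosure = ⊤ := by
  rw [Submodule.topologicalClosure_eq_top_iff, Submodule.eq_bot_iff]
  intro f hf
  refine (Lp.eq_zero_iff_ae_eq_zero).mpr (ae_eq_zero_of_fourierIntegral_eq_zero
    continuous_fourierChar fourierChar_ne_one (L := innerₗ E) continuous_inner ?_
    ((Lp.memLp f).integrable one_le_two) ?_)
  · exact fun v hv h ↦ hv (inner_self_eq_zero.mp (congr($h v)))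
  · ext x
    rw [← inner_expLp_eq_fourierIntegral]
    exact hf _ (Submodule.subset_span (mem_range_self x))

/-- The Jorgensen–Pedersen criterion. -/
theorem spectrum_iff_tiling_general (μ ν : Measure E) [IsProbabilityMeasure μ]
    [ν.IsOpenPosMeasure] (Λ : Set E) :
    IsMeasureSpectrum μ Λ ↔ ∀ᵐ x ∂ν, ∑' l : Λ, ‖ftMeasure μ (x - l)‖ₑ ^ 2 = 1 := by
  have hparseval (x : E) : ∑' l : Λ, ‖ftMeasure μ (x - l)‖ₑ ^ 2 = 1 ↔
      ∑' l : Λ, ‖inner ℂ (expLp μ l) (expLp μ x)‖ₑ ^ 2 = ‖expLp μ x‖ₑ ^ 2 := by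
    simp only [← inner_expLp_expLp, ← ofReal_norm, norm_expLp, norm_inner_symm (expLp μ x),
      ENNReal.ofReal_one, one_pow]
  simp only [hparseval]
  constructor
  · rintro ⟨horth, htotal⟩
    refine ae_of_all _ fun x ↦ ?_
    simpa using tsum_enorm_inner_sq_hilbertBasis (HilbertBasis.mk horth htotal.ge) (expLp μ x)
  · intro h
    have hclosure : range (expLp μ) ⊆ closure (expLp μ '' {x | _}) :=
      (continuous_expLp μ).range_subset_closure_image_dense (Measure.dense_of_ae h)
    refine orthonormal_and_total_of_tsum_enorm_inner_sq (fun l ↦ norm_expLp μ l)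
      (fun l ↦ hclosure (mem_range_self _)) ?_ (forall_mem_image.mpr fun x hx ↦ hx)
    rw [eq_top_iff, ← topologicalClosure_span_range_expLp μ]
    refine Submodule.topologicalClosure_minimal _ (Submodule.span_le.mpr ?_)
      (Submodule.isClosed_topologicalClosure _)
    exact hclosure.trans (closure_mono Submodule.subset_span)

end MeasureSpectrum

section RealLine

lemma expF_eq_fourierChar_s5 (l t : ℝ) : expF l t = Real.fourierChar (inner ℝ t l) := by
  rw [expF, Real.fourierChar_apply, Real.inner_apply]
  congr 1
  push_cast
  ring

lemma ftChi_eq_ftMeasure (Ω : Set ℝ) : ftChi Ω = ftMeasure (volume.restrict Ω) := by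
  ext ξ
  refine integral_congr_ae (ae_of_all _ fun t ↦ ?_)
  simp only [innerₗ_apply_apply, Real.inner_apply, Pi.one_apply, Circle.smul_def, smul_eq_mul,
    mul_one, Real.fourierChar_apply]
  congr 1
  push_cast
  ring

lemma isSpectrum_iff_isMeasureSpectrum (Ω Λ : Set ℝ) [IsFiniteMeasure (volume.restrict Ω)] :
    IsSpectrum Ω Λ ↔ IsMeasureSpectrum (volume.restrict Ω) Λ := by
  have hexp (l : ℝ) : expLp (volume.restrict Ω) l =ᵐ[volume.restrict Ω] expF l :=
    (coeFn_expLp _ l).trans (ae_of_all _ fun t ↦ (expF_eq_fourierChar_s5 l t).symm)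
  constructor
  · rintro ⟨F, hF, hspectrum⟩
    obtain rfl : F = fun l : Λ ↦ expLp (volume.restrict Ω) l :=
      funext fun l ↦ Lp.ext ((hF l).trans (hexp l).symm)
    exact hspectrum
  · exact fun hspectrum ↦ ⟨_, fun l ↦ hexp l, hspectrum⟩

end RealLine

/-- `Λ` is a spectrum of `Ω` if and only if the tiling condition
`∑_{λ∈Λ} |χ̂_Ω(x-λ)|² = 1` holds a.e. -/
theorem spectrum_iff_tiling (Ω : Set ℝ)
    (hbd : Bornology.IsBounded Ω) (hmeas : MeasurableSet Ω)
    (hvol : volume Ω = 1) (Λ : Set ℝ) :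
    IsSpectrum Ω Λ ↔
      ∀ᵐ x : ℝ, ∑' l : Λ, ((‖ftChi Ω (x - (l : ℝ))‖₊ : ℝ≥0∞)) ^ 2 = 1 := by
  have : IsProbabilityMeasure (volume.restrict Ω) := ⟨by rw [Measure.restrict_apply_univ, hvol]⟩
  rw [isSpectrum_iff_isMeasureSpectrum, ftChi_eq_ftMeasure]
  exact spectrum_iff_tiling_general _ volume Λ
end

section
/- Let Ω ⊆ ℝ be a bounded measurable set of Lebesgue measure 1 and let Λ be a spectrum of Ω. Then Λ has finite complexity: for every h > 0 the collection of sets { (Λ - λ) ∩ [0, h] : λ ∈ Λ } is finite. -/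
open MeasureTheory Set

/-!
If `e_l` and `e_m` are orthogonal in `L²(μ)`, then `m - l` is a zero of the Fourier transform of
`μ`. When `μ` has exponential moments (for instance bounded support) this transform is real
analytic; it does not vanish at `0`, so its zeros in a compact set `K` are finite in number. Hence
each set `(Λ - l) ∩ K` is a subset of one and the same finite set.
-/

open ProbabilityTheory
open scoped ComplexConjugate Pointwise

theorem finite_setOf_translates_inter {G : Type*} [Sub G] {Λ K : Set G}
    (h : ((Λ - Λ) ∩ K).Finite) :
    {S : Set G | ∃ l ∈ Λ, S = ((fun m => m - l) '' Λ) ∩ K}.Finite := by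
  refine h.finite_subsets.subset ?_
  rintro _ ⟨l, hl, rfl⟩
  exact inter_subset_inter_left K (image_subset_iff.2 fun m hm => sub_mem_sub hm hl)

theorem integrableExpSet_eq_univ_of_ae_mem_of_isBounded {α : Type*} {mα : MeasurableSpace α}
    {μ : Measure α} [IsFiniteMeasure μ] {X : α → ℝ} (hX : AEMeasurable X μ) {s : Set ℝ}
    (hs : Bornology.IsBounded s) (hXs : ∀ᵐ ω ∂μ, X ω ∈ s) : integrableExpSet X μ = univ := by
  refine eq_univ_of_forall fun t => integrable_exp_mul_of_mem_Icc (a := sInf s) (b := sSup s) hX ?_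
  exact hXs.mono fun ω hω => hs.subset_Icc_sInf_sSup hω

theorem expF_mul_conj_expF (l m x : ℝ) : expF m x * conj (expF l x) = expF (m - l) x := by
  simp only [expF, ← Complex.exp_conj, ← Complex.exp_add, map_mul, map_ofNat, Complex.conj_I,
    Complex.conj_ofReal, Complex.ofReal_sub]
  ring_nf

/-- The exponentials `e_l`, `l ∈ Λ`, are pairwise orthogonal in `L²(μ)`. The inner product is
written as an integral of functions on `ℝ`, which is meaningful when `μ` is finite. -/
def HasOrthogonalExponentials (μ : Measure ℝ) (Λ : Set ℝ) : Prop :=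
  Λ.Pairwise fun l m => ∫ x, expF m x * conj (expF l x) ∂μ = 0

theorem IsSpectrum.hasOrthogonalExponentials {Ω Λ : Set ℝ} (hΛ : IsSpectrum Ω Λ) :
    HasOrthogonalExponentials (volume.restrict Ω) Λ := by
  obtain ⟨F, hF, hortho, -⟩ := hΛ
  intro l hl m hm hlm
  have hinner : inner ℂ (F ⟨l, hl⟩) (F ⟨m, hm⟩) = 0 :=
    hortho.inner_eq_zero (Subtype.coe_ne_coe.1 hlm)
  rw [← hinner, L2.inner_def]
  refine integral_congr_ae ?_
  filter_upwards [hF ⟨l, hl⟩, hF ⟨m, hm⟩] with x hlx hmx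
  rw [hlx, hmx, RCLike.inner_apply]

section Measure

variable {μ : Measure ℝ}

theorem HasOrthogonalExponentials.sub_subset {Λ : Set ℝ}
    (hΛ : HasOrthogonalExponentials μ Λ) : Λ - Λ ⊆ insert 0 {t | ∫ x, expF t x ∂μ = 0} := by
  rintro _ ⟨m, hm, l, hl, rfl⟩
  obtain rfl | hlm := eq_or_ne l m
  · exact Or.inl (sub_self l)
  · have hzero : ∫ x, expF (m - l) x ∂μ = 0 := by
      simpa only [expF_mul_conj_expF] using hΛ hl hm hlm
    exact Or.inr hzero

theorem integral_expF_eq_complexMGF (t : ℝ) :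
    ∫ x, expF t x ∂μ = complexMGF id μ (2 * Real.pi * Complex.I * t) := rfl

theorem analyticOnNhd_integral_expF (hμ : 0 ∈ interior (integrableExpSet id μ)) :
    AnalyticOnNhd ℝ (fun t => ∫ x, expF t x ∂μ) univ := by
  intro t _
  simp only [integral_expF_eq_complexMGF]
  have hMGF : AnalyticAt ℂ (complexMGF id μ) (2 * Real.pi * Complex.I * t) :=
    analyticAt_complexMGF (by simpa using hμ)
  have hline : AnalyticAt ℝ (fun t : ℝ => 2 * Real.pi * Complex.I * (t : ℂ)) t :=
    analyticAt_const.mul (Complex.ofRealCLM.analyticAt t)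
  exact hMGF.restrictScalars.comp_of_eq hline rfl

theorem integral_expF_zero_ne_zero [IsFiniteMeasure μ] [NeZero μ] : ∫ x, expF 0 x ∂μ ≠ 0 := by
  simp [expF, measureReal_eq_zero_iff, NeZero.ne μ]

theorem finite_inter_setOf_integral_expF_eq_zero [NeZero μ]
    (hμ : 0 ∈ interior (integrableExpSet id μ)) {K : Set ℝ} (hK : IsCompact K) :
    (K ∩ {t | ∫ x, expF t x ∂μ = 0}).Finite := by
  have : IsFiniteMeasure μ := by
    simpa [integrableExpSet, integrable_const_iff] using interior_subset hμ
  have hcodiscrete :=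
    (analyticOnNhd_integral_expF hμ).preimage_zero_mem_codiscrete integral_expF_zero_ne_zero
  refine (hK.finite_sdiff_of_mem_codiscreteWithin
    (Filter.codiscreteWithin_mono (subset_univ K) hcodiscrete)).subset ?_
  exact fun t ht => ⟨ht.1, fun hne => hne ht.2⟩

end Measure

theorem spectrum_finite_complexity_general {μ : Measure ℝ} [NeZero μ]
    (hμ : 0 ∈ interior (integrableExpSet id μ)) {Λ : Set ℝ}
    (hΛ : HasOrthogonalExponentials μ Λ) {K : Set ℝ} (hK : IsCompact K) :
    {S : Set ℝ | ∃ l ∈ Λ, S = ((fun m => m - l) '' Λ) ∩ K}.Finite := by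
  refine finite_setOf_translates_inter
    (((finite_inter_setOf_integral_expF_eq_zero hμ hK).insert 0).subset ?_)
  rintro t ⟨ht, htK⟩
  exact (hΛ.sub_subset ht).imp_right fun hzero => ⟨htK, hzero⟩

/-- Finite complexity of a spectrum: for each window width `h` only finitely many
sets arise as `(Λ - λ) ∩ [0, h]`, `λ ∈ Λ`. -/
theorem spectrum_finite_complexity (Ω : Set ℝ)
    (hbd : Bornology.IsBounded Ω) (hmeas : MeasurableSet Ω)
    (hvol : volume Ω = 1) (Λ : Set ℝ) (hΛ : IsSpectrum Ω Λ) :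
    ∀ h : ℝ, 0 < h →
      {S : Set ℝ | ∃ l ∈ Λ, S = ((fun m => m - l) '' Λ) ∩ Icc 0 h}.Finite := by
  intro h _
  have : IsProbabilityMeasure (volume.restrict Ω) := ⟨by rw [Measure.restrict_apply_univ, hvol]⟩
  have hexp : integrableExpSet id (volume.restrict Ω) = univ :=
    integrableExpSet_eq_univ_of_ae_mem_of_isBounded aemeasurable_id hbd (ae_restrict_mem hmeas)
  exact spectrum_finite_complexity_general (by simp [hexp]) hΛ.hasOrthogonalExponentials
    isCompact_Icc
end
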